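/- arXiv:1810.03901 — 2 statements merged into one kernel-verified Lean document; each statement's English description precedes it below -/
import Mathlib

section
/- Let f ∈ ℬ be convenient and Newton nondegenerate with Newton polytope P. If every proper face of P is a simplex (P is simplicial), then gr^𝒩_α(ℬ/ℒ) = 0 for every α ∈ ℚ with α ≥ n; that is, the toric Newton spectrum of f is contained in the interval [0, n). -/
open MvPolynomial

namespace ToricNewton

section
variable {σ : Type*} [Fintype σ] [DecidableEq σ]

/-- Coercion of a lattice point of `ℕ^σ` into `ℝ^σ`. -/
def natToR (v : σ → ℕ) : σ → ℝ := fun i => (v i : ℝ)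

/-- Coercion of an exponent (finitely supported) into `ℝ^σ`. -/
def toR (m : σ →₀ ℕ) : σ → ℝ := fun i => (m i : ℝ)

/-- The Newton polytope of a polynomial: the convex hull of `{0} ∪ supp f`. -/
noncomputable def newtonPolytope (f : MvPolynomial σ ℂ) : Set (σ → ℝ) :=
  convexHull ℝ ({0} ∪ (toR '' (f.support : Set (σ →₀ ℕ))))

/-- The Newton function `ν`, which for a convenient polynomial is the gauge
(Minkowski functional) of the Newton polytope. -/
noncomputable def nu (f : MvPolynomial σ ℂ) (x : σ → ℝ) : ℝ :=
  gauge (newtonPolytope f) x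

/-- `f` is convenient if for each variable `i` some pure power `uᵢ^k`, `k ≥ 1`,
occurs in `f` with nonzero coefficient. -/
def Convenient (f : MvPolynomial σ ℂ) : Prop :=
  ∀ i : σ, ∃ k : ℕ, 1 ≤ k ∧ f.coeff (Finsupp.single i k) ≠ 0

/-- `Δ` is a (nonempty exposed) closed face of `P`. -/
def IsFace (P Δ : Set (σ → ℝ)) : Prop :=
  Δ.Nonempty ∧ ∃ (l : (σ → ℝ) →ₗ[ℝ] ℝ) (c : ℝ),
    (∀ x ∈ P, l x ≤ c) ∧ Δ = {x ∈ P | l x = c}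

/-- A face of the Newton boundary: a closed face of the Newton polytope not
containing the origin. -/
def NBFace (f : MvPolynomial σ ℂ) (Δ : Set (σ → ℝ)) : Prop :=
  IsFace (newtonPolytope f) Δ ∧ (0 : σ → ℝ) ∉ Δ

open Classical in
/-- The truncation `g_Δ` of `g` to the monomials whose exponents lie in `Δ`. -/
noncomputable def faceRestrict (Δ : Set (σ → ℝ)) (g : MvPolynomial σ ℂ) : MvPolynomial σ ℂ :=
  ∑ m ∈ g.support, if toR m ∈ Δ then monomial m (g.coeff m) else 0

/-- `f` is Newton nondegenerate: for every closed face `Δ` of the Newton boundary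
the system `(u₁ ∂f/∂u₁)_Δ = ⋯ = (uₙ ∂f/∂uₙ)_Δ = 0` has no solution in `(ℂ*)ⁿ`. -/
def Nondegenerate (f : MvPolynomial σ ℂ) : Prop :=
  ∀ Δ : Set (σ → ℝ), NBFace f Δ →
    ¬ ∃ x : σ → ℂ, (∀ i, x i ≠ 0) ∧
        ∀ i, eval x (faceRestrict Δ (X i * pderiv i f)) = 0

/-- The ideal `ℒ` generated by the `uᵢ ∂f/∂uᵢ`. -/
noncomputable def LIdeal (f : MvPolynomial σ ℂ) : Ideal (MvPolynomial σ ℂ) :=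
  Ideal.span (Set.range fun i => X i * pderiv i f)

/-- The Jacobian ideal `ℐ` generated by the `∂f/∂uᵢ`. -/
noncomputable def IIdeal (f : MvPolynomial σ ℂ) : Ideal (MvPolynomial σ ℂ) :=
  Ideal.span (Set.range fun i => pderiv i f)

/-- The Newton filtration `𝒩_α ℬ`: the span of the monomials `u^m` with `ν(m) ≤ α`. -/
noncomputable def Nle (f : MvPolynomial σ ℂ) (α : ℝ) : Submodule ℂ (MvPolynomial σ ℂ) where
  carrier := {g | ∀ m ∈ g.support, nu f (toR m) ≤ α}
  zero_mem' := by simp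
  add_mem' := by
    intro a b ha hb m hm
    rcases Finset.mem_union.mp (MvPolynomial.support_add hm) with h | h
    · exact ha m h
    · exact hb m h
  smul_mem' := by
    intro c a ha m hm
    exact ha m (MvPolynomial.support_smul hm)

/-- The filtration `𝒩_{<α} ℬ`. -/
noncomputable def Nlt (f : MvPolynomial σ ℂ) (α : ℝ) : Submodule ℂ (MvPolynomial σ ℂ) where
  carrier := {g | ∀ m ∈ g.support, nu f (toR m) < α}
  zero_mem' := by simp
  add_mem' := by
    intro a b ha hb m hm
    rcases Finset.mem_union.mp (MvPolynomial.support_add hm) with h | h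
    · exact ha m h
    · exact hb m h
  smul_mem' := by
    intro c a ha m hm
    exact ha m (MvPolynomial.support_smul hm)

/-- The twisted filtration `W_α ℬ`: the span of the monomials `u^m` with
`ν(m + (1,…,1)) ≤ α`. -/
noncomputable def Wle (f : MvPolynomial σ ℂ) (α : ℝ) : Submodule ℂ (MvPolynomial σ ℂ) where
  carrier := {g | ∀ m ∈ g.support, nu f (toR m + 1) ≤ α}
  zero_mem' := by simp
  add_mem' := by
    intro a b ha hb m hm
    rcases Finset.mem_union.mp (MvPolynomial.support_add hm) with h | h
    · exact ha m h
    · exact hb m h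
  smul_mem' := by
    intro c a ha m hm
    exact ha m (MvPolynomial.support_smul hm)

/-- The twisted filtration `W_{<α} ℬ`. -/
noncomputable def Wlt (f : MvPolynomial σ ℂ) (α : ℝ) : Submodule ℂ (MvPolynomial σ ℂ) where
  carrier := {g | ∀ m ∈ g.support, nu f (toR m + 1) < α}
  zero_mem' := by simp
  add_mem' := by
    intro a b ha hb m hm
    rcases Finset.mem_union.mp (MvPolynomial.support_add hm) with h | h
    · exact ha m h
    · exact hb m h
  smul_mem' := by
    intro c a ha m hm
    exact ha m (MvPolynomial.support_smul hm)

/-- The graded piece `gr^𝒩_α(ℬ/ℒ) = (𝒩_α ℬ + ℒ)/(𝒩_{<α} ℬ + ℒ)`, realized as the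
image of `𝒩_α ℬ + ℒ` in `ℬ/(𝒩_{<α} ℬ + ℒ)`. -/
noncomputable def grN (f : MvPolynomial σ ℂ) (α : ℝ) :
    Submodule ℂ (MvPolynomial σ ℂ ⧸ (Nlt f α ⊔ (LIdeal f).restrictScalars ℂ)) :=
  Submodule.map (Nlt f α ⊔ (LIdeal f).restrictScalars ℂ).mkQ
    (Nle f α ⊔ (LIdeal f).restrictScalars ℂ)

/-- `dim_ℂ gr^𝒩_α(ℬ/ℒ)`. -/
noncomputable def grDim (f : MvPolynomial σ ℂ) (α : ℝ) : ℕ :=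
  Module.finrank ℂ (grN f α)

/-- The graded piece `gr^W_α(ℬ/ℐ) = (W_α ℬ + ℐ)/(W_{<α} ℬ + ℐ)`. -/
noncomputable def grW (f : MvPolynomial σ ℂ) (α : ℝ) :
    Submodule ℂ (MvPolynomial σ ℂ ⧸ (Wlt f α ⊔ (IIdeal f).restrictScalars ℂ)) :=
  Submodule.map (Wlt f α ⊔ (IIdeal f).restrictScalars ℂ).mkQ
    (Wle f α ⊔ (IIdeal f).restrictScalars ℂ)

/-- `dim_ℂ gr^W_α(ℬ/ℐ)`. -/
noncomputable def grWDim (f : MvPolynomial σ ℂ) (α : ℝ) : ℕ :=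
  Module.finrank ℂ (grW f α)

/-- The dimension of a face, i.e. of the direction of its affine span. -/
noncomputable def faceDim (Δ : Set (σ → ℝ)) : ℕ :=
  Module.finrank ℝ (affineSpan ℝ Δ).direction

/-- `Δ` is a simplex: the convex hull of an affinely independent family. -/
def IsSimplex (Δ : Set (σ → ℝ)) : Prop :=
  ∃ (k : ℕ) (p : Fin (k + 1) → (σ → ℝ)), AffineIndependent ℝ p ∧ Δ = convexHull ℝ (Set.range p)

/-- The union of the coordinate hyperplanes. -/
def coordHyperplanes (σ : Type*) : Set (σ → ℝ) := ⋃ i : σ, {x : σ → ℝ | x i = 0}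

/-- `Box(Δ)`: the set of combinations `Σ q_ℓ b_ℓ`, `q_ℓ ∈ [0,1)`, of the vertices
(extreme points) of `Δ`. -/
def Box (Δ : Set (σ → ℝ)) : Set (σ → ℝ) :=
  {x | ∃ s : Finset (σ → ℝ), ↑s ⊆ Δ.extremePoints ℝ ∧
      ∃ q : (σ → ℝ) → ℝ, (∀ b ∈ s, 0 ≤ q b ∧ q b < 1) ∧ x = ∑ b ∈ s, q b • b}

/-- `Δ ∈ ℱ(P)`: a closed face of the Newton polytope of `f` not contained in the
union of the coordinate hyperplanes. -/
def FcalMem (f : MvPolynomial σ ℂ) (Δ : Set (σ → ℝ)) : Prop :=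
  IsFace (newtonPolytope f) Δ ∧ ¬ Δ ⊆ coordHyperplanes σ

/-- `Box(P)`: the union of `Box(Δ)` over the closed faces of the Newton boundary
not contained in the union of the coordinate hyperplanes. -/
def BoxP (f : MvPolynomial σ ℂ) : Set (σ → ℝ) :=
  ⋃ Δ ∈ {Δ : Set (σ → ℝ) | NBFace f Δ ∧ ¬ Δ ⊆ coordHyperplanes σ}, Box Δ

/-- The cone `ℝ₊·Δ` over `Δ`. -/
def cone0 (Δ : Set (σ → ℝ)) : Set (σ → ℝ) :=
  {x | ∃ t : ℝ, 0 ≤ t ∧ ∃ y ∈ Δ, x = t • y}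

/-- The restriction of `f` obtained by setting the variables in `S` to zero. -/
noncomputable def restrictZero (S : Finset σ) (f : MvPolynomial σ ℂ) :
    MvPolynomial {j : σ // j ∉ S} ℂ :=
  aeval (fun j : σ => if h : j ∉ S then X (⟨j, h⟩ : {j : σ // j ∉ S}) else 0) f

end

end ToricNewton


namespace ToricNewton

theorem hc_mul {σ : Type*} {g h : MvPolynomial σ ℂ} {d : ℕ} (hg : g.IsHomogeneous d) (j : ℕ) :
    homogeneousComponent (d + j) (g * h) = g * homogeneousComponent j h := by
  conv_lhs => rw [← sum_homogeneousComponent h, Finset.mul_sum, map_sum]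
  have : ∀ i ∈ Finset.range (h.totalDegree + 1),
      homogeneousComponent (d + j) (g * homogeneousComponent i h) =
        if i = j then g * homogeneousComponent j h else 0 := by
    intro i _
    rw [homogeneousComponent_of_mem (m := d + j) (n := d + i)
      (hg.mul (homogeneousComponent_isHomogeneous i h))]
    by_cases hij : i = j
    · subst hij; simp
    · simp [hij, Ne.symm hij]
  rw [Finset.sum_congr rfl this, Finset.sum_ite_eq']
  split_ifs with hj
  · rfl
  · rw [homogeneousComponent_eq_zero]
    · simp
    · simpa using hj

theorem hc_mul_lt {σ : Type*} {g h : MvPolynomial σ ℂ} {d : ℕ} (hg : g.IsHomogeneous d) {j : ℕ}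
    (hj : j < d) :
    homogeneousComponent j (g * h) = 0 := by
  conv_lhs => rw [← sum_homogeneousComponent h, Finset.mul_sum, map_sum]
  apply Finset.sum_eq_zero
  intro i _
  rw [homogeneousComponent_of_mem (m := j) (n := d + i)
      (hg.mul (homogeneousComponent_isHomogeneous i h))]
  rw [if_neg (by omega)]

/-- An ideal stable under homogeneous components. -/
def HomI {σ : Type*} (I : Ideal (MvPolynomial σ ℂ)) : Prop :=
  ∀ p ∈ I, ∀ j, homogeneousComponent j p ∈ I

theorem homI_span {σ : Type*} (S : Set (MvPolynomial σ ℂ)) (d : ℕ)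
    (hS : ∀ s ∈ S, s.IsHomogeneous d) : HomI (Ideal.span S) := by
  intro p hp
  induction hp using Submodule.span_induction with
  | mem x hx =>
    intro j
    rw [homogeneousComponent_of_mem (m := j) (n := d) (hS x hx)]
    split_ifs
    · exact Ideal.subset_span hx
    · exact zero_mem _
  | zero => simp
  | add x y _ _ hx hy => intro j; rw [map_add]; exact add_mem (hx j) (hy j)
  | smul a x hx ih =>
    intro j
    rw [smul_eq_mul]
    rw [← sum_homogeneousComponent a, Finset.sum_mul, map_sum]
    refine sum_mem fun i _ => ?_
    by_cases hij : i ≤ j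
    · obtain ⟨k, rfl⟩ := Nat.exists_eq_add_of_le hij
      rw [hc_mul (homogeneousComponent_isHomogeneous i a)]
      exact Ideal.mul_mem_left _ _ (ih k)
    · rw [hc_mul_lt (homogeneousComponent_isHomogeneous i a) (by omega)]
      exact zero_mem _

theorem mem_of_hc_mem {σ : Type*} {I : Ideal (MvPolynomial σ ℂ)} {p : MvPolynomial σ ℂ}
    (h : ∀ j, homogeneousComponent j p ∈ I) : p ∈ I := by
  rw [← sum_homogeneousComponent p]
  exact sum_mem fun i _ => h i

/-- Separation lemma. -/
theorem sep {σ : Type*} {I : Ideal (MvPolynomial σ ℂ)} (hI : HomI I) {G l : MvPolynomial σ ℂ}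
    (hl1 : l.IsHomogeneous 1)
    (hl : ∀ h, l * h ∈ I → h ∈ I)
    (hG : ∀ h, G * h ∈ I → h ∈ I ⊔ Ideal.span {l}) :
    ∀ h, G * h ∈ I → h ∈ I := by
  intro h hh
  have step : ∀ N : ℕ, ∃ i ∈ I, ∃ r, h = i + l ^ N * r ∧ G * r ∈ I := by
    intro N
    induction N with
    | zero => exact ⟨0, zero_mem _, h, by simp, hh⟩
    | succ N ih =>
      obtain ⟨i, hi, r, hr, hGr⟩ := ih
      obtain ⟨i', hi', s, hs, hsum⟩ := Submodule.mem_sup.1 (hG r hGr)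
      obtain ⟨t, rfl⟩ := Ideal.mem_span_singleton'.1 hs
      refine ⟨i + l ^ N * i', add_mem hi (Ideal.mul_mem_left _ _ hi'), t, ?_, ?_⟩
      · rw [hr, ← hsum]; ring
      · apply hl
        have : l * (G * t) = G * r - G * i' := by rw [← hsum]; ring
        rw [this]
        exact sub_mem hGr (Ideal.mul_mem_left _ _ hi')
  apply mem_of_hc_mem
  intro j
  obtain ⟨i, hi, r, hr, -⟩ := step (j + 1)
  rw [hr, map_add, hc_mul_lt (d := j + 1) (by simpa using hl1.pow (j + 1)) (by omega), add_zero]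
  exact hI i hi j

/-- The ideal spanned by the first `k` elements. -/
noncomputable def Ik {σ : Type*} (G : ℕ → MvPolynomial σ ℂ) (k : ℕ) : Ideal (MvPolynomial σ ℂ) :=
  Ideal.span (G '' Set.Iio k)

theorem Ik_succ {σ : Type*} (G : ℕ → MvPolynomial σ ℂ) (k : ℕ) :
    Ik G (k + 1) = Ik G k ⊔ Ideal.span {G k} := by
  unfold Ik
  rw [← Ideal.span_union]
  congr 1
  rw [← Set.image_singleton, ← Set.image_union]
  congr 1
  ext x; simp

theorem lift_regular {σ τ : Type*} (π : MvPolynomial σ ℂ →+* MvPolynomial τ ℂ)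
    (hπs : Function.Surjective π)
    (l : MvPolynomial σ ℂ) (hl1 : l.IsHomogeneous 1) (hl0 : l ≠ 0) (hker : ∀ p, π p = 0 → ∃ q, p = l * q)
    (hπl : π l = 0)
    (G : ℕ → MvPolynomial σ ℂ) (d n : ℕ) (hG : ∀ i < n, (G i).IsHomogeneous d)
    (hreg : ∀ k < n, ∀ h, π (G k) * h ∈ Ik (fun i => π (G i)) k → h ∈ Ik (fun i => π (G i)) k) :
    ∀ k ≤ n, (∀ h, l * h ∈ Ik G k → h ∈ Ik G k) ∧
      (k < n → ∀ h, G k * h ∈ Ik G k → h ∈ Ik G k) := by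
  have hmap : ∀ k, (Ik G k).map π = Ik (fun i => π (G i)) k := by
    intro k
    simp only [Ik, Ideal.map_span, Set.image_image]
  have hback : ∀ k h, π h ∈ Ik (fun i => π (G i)) k → ∃ i ∈ Ik G k, ∃ q, h = i + l * q := by
    intro k h hh
    rw [← hmap, Ideal.mem_map_iff_of_surjective π hπs] at hh
    obtain ⟨i, hi, hih⟩ := hh
    obtain ⟨q, hq⟩ := hker (h - i) (by simp [hih])
    exact ⟨i, hi, q, by rw [← hq]; ring⟩
  have nzG : ∀ k < n, (∀ h, l * h ∈ Ik G k → h ∈ Ik G k) → ∀ h, G k * h ∈ Ik G k → h ∈ Ik G k := by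
    intro k hk hl
    refine sep (homI_span _ d ?_) hl1 hl ?_
    · rintro _ ⟨i, hi, rfl⟩; exact hG i (lt_trans hi hk)
    · intro h hh
      have h1 : π (G k) * π h ∈ Ik (fun i => π (G i)) k := by
        rw [← map_mul, ← hmap]; exact Ideal.mem_map_of_mem _ hh
      obtain ⟨i, hi, q, rfl⟩ := hback k h (hreg k hk _ h1)
      exact add_mem (Ideal.mem_sup_left hi)
        (Ideal.mem_sup_right (Ideal.mem_span_singleton'.2 ⟨q, mul_comm _ _⟩))
  have main : ∀ k ≤ n, (∀ h, l * h ∈ Ik G k → h ∈ Ik G k) := by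
    intro k
    induction k with
    | zero =>
      intro _ h hh
      simp [Ik] at hh ⊢
      exact hh.resolve_left hl0
    | succ k ih =>
      intro hk m hm
      have ih := ih (by omega)
      rw [Ik_succ] at hm ⊢
      obtain ⟨i, hi, s, hs, hsum⟩ := Submodule.mem_sup.1 hm
      obtain ⟨m', rfl⟩ := Ideal.mem_span_singleton'.1 hs
      have h1 : π (G k) * π m' ∈ Ik (fun i => π (G i)) k := by
        have : π (G k) * π m' = - π i := by
          have := congrArg π hsum
          simp only [map_add, map_mul, hπl, zero_mul] at this
          linear_combination this
        rw [this, ← hmap]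
        exact neg_mem (Ideal.mem_map_of_mem _ hi)
      obtain ⟨i', hi', q, rfl⟩ := hback k m' (hreg k (by omega) _ h1)
      have h2 : m - G k * q ∈ Ik G k := by
        apply ih
        have : l * (m - G k * q) = i + i' * G k := by linear_combination -hsum
        rw [this]
        exact add_mem hi (Ideal.mul_mem_right _ _ hi')
      have : m = (m - G k * q) + q * G k := by ring
      rw [this]
      exact add_mem (Ideal.mem_sup_left h2)
        (Ideal.mem_sup_right (Ideal.mem_span_singleton'.2 ⟨q, rfl⟩))
  exact fun k hk => ⟨main k hk, fun hkn => nzG k hkn (main k hk)⟩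

theorem hom_div {σ : Type*} {I : Ideal (MvPolynomial σ ℂ)} (hI : HomI I) {g p : MvPolynomial σ ℂ}
    {d a : ℕ} (hg : g.IsHomogeneous d) (hp : p.IsHomogeneous (d + a))
    (h : p ∈ I ⊔ Ideal.span {g}) : ∃ q, q.IsHomogeneous a ∧ p - g * q ∈ I := by
  obtain ⟨i, hi, s, hs, hsum⟩ := Submodule.mem_sup.1 h
  obtain ⟨t, rfl⟩ := Ideal.mem_span_singleton'.1 hs
  refine ⟨homogeneousComponent a t, homogeneousComponent_isHomogeneous a t, ?_⟩
  have h1 : p = homogeneousComponent (d + a) i + g * homogeneousComponent a t := by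
    rw [← hc_mul hg, ← map_add, mul_comm g, hsum]
    exact (homogeneousComponent_eq_self hp).symm
  have h2 : p - g * homogeneousComponent a t = homogeneousComponent (d + a) i := by
    linear_combination h1
  rw [h2]
  exact hI i hi _

theorem oneDim {σ : Type*} [Finite σ] {I : Ideal (MvPolynomial σ ℂ)} (hI : HomI I)
    {l g : MvPolynomial σ ℂ} {d s K : ℕ}
    (hl1 : l.IsHomogeneous 1) (hgd : g.IsHomogeneous d)
    (hl : ∀ h, l * h ∈ I → h ∈ I)
    (hs : ∀ e p, s ≤ e → p.IsHomogeneous e → p ∈ I ⊔ Ideal.span {l})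
    (hK : ∀ e p, K ≤ e → p.IsHomogeneous e → p ∈ I ⊔ Ideal.span {g}) :
    (∀ h, g * h ∈ I → h ∈ I) ∧
    (∀ e p, s + d ≤ e + 1 → d ≤ e → p.IsHomogeneous e → p ∈ I ⊔ Ideal.span {g}) := by
  classical
  let Q := MvPolynomial σ ℂ ⧸ I
  let mk : MvPolynomial σ ℂ →ₗ[ℂ] Q := (Ideal.Quotient.mkₐ ℂ I).toLinearMap
  have mk_eq0 : ∀ p, mk p = 0 ↔ p ∈ I := fun p => Ideal.Quotient.eq_zero_iff_mem
  have mk_eq : ∀ p q, p - q ∈ I → mk p = mk q := fun p q h => Ideal.Quotient.eq.2 h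
  have mk_mul : ∀ p q, mk (p * q) = mk p * mk q := fun p q => map_mul (Ideal.Quotient.mkₐ ℂ I) p q
  have mk_surj : Function.Surjective mk := Ideal.Quotient.mk_surjective
  let Lm : Q →ₗ[ℂ] Q := LinearMap.mulLeft ℂ (mk l)
  let Gm : Q →ₗ[ℂ] Q := LinearMap.mulLeft ℂ (mk g)
  have hcomm : ∀ k x, (Lm ^ k) (Gm x) = Gm ((Lm ^ k) x) := by
    intro k
    induction k with
    | zero => intro x; rfl
    | succ k ih =>
      intro x
      rw [pow_succ, Module.End.mul_apply, Module.End.mul_apply]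
      rw [← ih]
      congr 1
      simp only [Lm, Gm, LinearMap.mulLeft_apply]; ring
  have Linj : Function.Injective Lm := by
    rw [← LinearMap.ker_eq_bot, LinearMap.ker_eq_bot']
    intro x hx
    obtain ⟨p, rfl⟩ := mk_surj x
    rw [LinearMap.mulLeft_apply, ← mk_mul, mk_eq0] at hx
    exact (mk_eq0 _).2 (hl _ hx)
  have Lkinj : ∀ k : ℕ, Function.Injective (Lm ^ k) := by
    intro k
    rw [Module.End.coe_pow]
    exact Linj.iterate k
  let W : ℕ → Submodule ℂ Q := fun a => (homogeneousSubmodule σ ℂ a).map mk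
  have Wfin : ∀ a, FiniteDimensional ℂ (W a) := by
    intro a
    apply Module.Finite.iff_fg.2
    exact (homogeneousSubmodule_fg _ _ a).map _
  have memW : ∀ {a p}, p.IsHomogeneous a → mk p ∈ W a := fun {a p} hp =>
    Submodule.mem_map_of_mem ((mem_homogeneousSubmodule _ _).2 hp)
  have WL1 : ∀ a, s ≤ a + 1 → W (a + 1) = (W a).map Lm := by
    intro a ha
    apply le_antisymm
    · rintro _ ⟨p, hp, rfl⟩
      have hp : p.IsHomogeneous (1 + a) := by rw [add_comm]; exact hp
      obtain ⟨q, hq, hpq⟩ := hom_div hI hl1 hp (hs _ p (by omega) hp)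
      exact ⟨mk q, memW hq, by rw [LinearMap.mulLeft_apply, ← mk_mul]; exact (mk_eq _ _ hpq).symm⟩
    · rintro _ ⟨_, ⟨p, hp, rfl⟩, rfl⟩
      rw [LinearMap.mulLeft_apply, ← mk_mul]
      apply memW
      rw [add_comm]
      exact hl1.mul hp
  have WL : ∀ a k, s ≤ a + 1 → W (a + k) = (W a).map (Lm ^ k) := by
    intro a k ha
    induction k with
    | zero => ext x; simp
    | succ k ih =>
      rw [← add_assoc, WL1 _ (by omega), ih, ← Submodule.map_comp, pow_succ']
      rfl
  have WGle : ∀ a, (W a).map Gm ≤ W (a + d) := by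
    rintro a _ ⟨_, ⟨p, hp, rfl⟩, rfl⟩
    rw [LinearMap.mulLeft_apply, ← mk_mul]
    apply memW
    rw [add_comm]
    exact hgd.mul hp
  have WGK : ∀ a, K ≤ a + d → W (a + d) = (W a).map Gm := by
    intro a ha
    apply le_antisymm _ (WGle a)
    rintro _ ⟨p, hp, rfl⟩
    have hp : p.IsHomogeneous (d + a) := by rw [add_comm]; exact hp
    obtain ⟨q, hq, hpq⟩ := hom_div hI hgd hp (hK _ p (by omega) hp)
    exact ⟨mk q, memW hq, by rw [LinearMap.mulLeft_apply, ← mk_mul]; exact (mk_eq _ _ hpq).symm⟩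
  have WG : ∀ a, s ≤ a + 1 → W (a + d) = (W a).map Gm := by
    intro a ha
    have h1 : ((W a).map Gm).map (Lm ^ K) = (W (a + d)).map (Lm ^ K) := by
      rw [← WL (a + d) K (by omega), ← Submodule.map_comp]
      have : (Lm ^ K) ∘ₗ Gm = Gm ∘ₗ (Lm ^ K) := LinearMap.ext (hcomm K)
      rw [this, Submodule.map_comp, ← WL a K ha, ← WGK _ (by omega)]
      congr 1; omega
    exact (Submodule.map_injective_of_injective (Lkinj K) h1).symm
  have Ginj : ∀ a, s ≤ a + 1 → ∀ x ∈ W a, Gm x = 0 → x = 0 := by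
    intro a ha x hx h0
    have e1 : Module.finrank ℂ (W (a + d)) = Module.finrank ℂ (W a) := by
      rw [WL a d ha]
      exact (Submodule.equivMapOfInjective _ (Lkinj d) _).finrank_eq.symm
    rw [WG a ha] at e1
    let T : W a →ₗ[ℂ] Q := Gm.domRestrict (W a)
    have hr : T.range = (W a).map Gm := by
      rw [LinearMap.range_domRestrict]
    have := LinearMap.finrank_range_add_finrank_ker T
    rw [hr, e1] at this
    have hk : T.ker = ⊥ := Submodule.finrank_eq_zero.1 (by omega)
    have : (⟨x, hx⟩ : W a) ∈ T.ker := h0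
    rw [hk, Submodule.mem_bot] at this
    exact congrArg Subtype.val this
  constructor
  · intro h hh
    apply mem_of_hc_mem
    intro j
    have h1 : g * homogeneousComponent j h ∈ I := by
      rw [← hc_mul hgd]; exact hI _ hh _
    have h2 : (Lm ^ s) (mk (homogeneousComponent j h)) ∈ W (j + s) := by
      have hLm : ∀ k x a, x ∈ W a → (Lm ^ k) x ∈ W (a + k) := by
        intro k
        induction k with
        | zero => intro x a hx; simpa using hx
        | succ k ih =>
          intro x a hx
          obtain ⟨p, hp, rfl⟩ := hx
          rw [pow_succ, Module.End.mul_apply]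
          have := ih (Lm (mk p)) (a + 1) (by
            rw [LinearMap.mulLeft_apply, ← mk_mul]
            apply memW
            rw [add_comm]
            exact hl1.mul hp)
          rwa [add_assoc, add_comm 1 k] at this
      exact hLm s _ j (memW (homogeneousComponent_isHomogeneous j h))
    have h3 := Ginj _ (by omega) _ h2 (by
      rw [← hcomm, LinearMap.mulLeft_apply, ← mk_mul, (mk_eq0 _).2 h1, map_zero])
    rw [← mk_eq0]
    exact Lkinj s (by rw [h3, map_zero])
  · intro e p he hde hp
    obtain ⟨a, rfl⟩ := Nat.exists_eq_add_of_le' hde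
    have := memW hp
    rw [WG a (by omega)] at this
    obtain ⟨_, ⟨q, hq, rfl⟩, hqp⟩ := this
    rw [LinearMap.mulLeft_apply, ← mk_mul] at hqp
    have h1 : p - g * q ∈ I := by
      rw [← mk_eq0, map_sub, hqp, sub_self]
    have : p = (p - g * q) + q * g := by ring
    rw [this]
    exact add_mem (Ideal.mem_sup_left h1)
        (Ideal.mem_sup_right (Ideal.mem_span_singleton'.2 ⟨q, rfl⟩))

theorem null_bound {n : ℕ} (J : Ideal (MvPolynomial (Fin n) ℂ))
    (hz : ∀ w : Fin n → ℂ, (∀ p ∈ J, eval w p = 0) → w = 0) :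
    ∃ K, ∀ e p, K ≤ e → p.IsHomogeneous e → p ∈ J := by
  have h1 : Ideal.span (Set.range (X : Fin n → MvPolynomial (Fin n) ℂ)) ≤ J.radical := by
    rw [← vanishingIdeal_zeroLocus_eq_radical (K := ℂ), Ideal.span_le]
    rintro _ ⟨i, rfl⟩ w hw
    have : w = 0 := hz w (fun p hp => by simpa [aeval_eq_eval] using hw p hp)
    simp [this]
  obtain ⟨K, hK⟩ := Ideal.exists_pow_le_of_le_radical_of_fg h1 ⟨Finset.univ.image X, by simp⟩
  refine ⟨K, fun e p he hp => hK (Ideal.pow_le_pow_right he ?_)⟩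
  rw [Ideal.mem_span_pow_iff_exists_isHomogeneous]
  refine ⟨map C p, hp.map _, ?_⟩
  rw [eval_map, ← eval₂_eta p]
  simp

theorem eval_smul_hom {σ : Type*} [Fintype σ] {p : MvPolynomial σ ℂ} {D : ℕ} (hp : p.IsHomogeneous D) (s : ℂ)
    (w : σ → ℂ) : eval (fun i => s * w i) p = s ^ D * eval w p := by
  rw [eval_eq', eval_eq', Finset.mul_sum]
  refine Finset.sum_congr rfl fun m hm => ?_
  have : m.degree = D := by
    by_contra h
    exact (mem_support_iff.1 hm) (hp.coeff_eq_zero h)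
  simp only [mul_pow, Finset.prod_mul_distrib, Finset.prod_pow_eq_pow_sum]
  rw [← this, Finsupp.degree_eq_sum]
  ring

theorem exists_relation {n d : ℕ} (hd : 1 ≤ d) (F : Fin (n + 1) → MvPolynomial (Fin n) ℂ)
    (hF : ∀ i, (F i).IsHomogeneous d) :
    ∃ (D : ℕ) (Φ : MvPolynomial (Fin (n + 1)) ℂ), Φ.IsHomogeneous (D + 1) ∧ Φ ≠ 0 ∧ aeval F Φ = 0 := by
  have h1 : ¬ AlgebraicIndependent ℂ F := by
    intro h
    have := h.lift_cardinalMk_le_trdeg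
    simp at this
  rw [algebraicIndependent_iff] at h1
  push Not at h1
  obtain ⟨Φ, h0, hne⟩ := h1
  have : ∃ D, homogeneousComponent D Φ ≠ 0 := by
    by_contra hcon
    push Not at hcon
    apply hne
    rw [← sum_homogeneousComponent Φ]
    exact Finset.sum_eq_zero fun i _ => hcon i
  obtain ⟨D, hD⟩ := this
  have h2 : aeval F (homogeneousComponent D Φ) = 0 := by
    have h3 := congrArg (homogeneousComponent (d * D)) h0
    rw [← sum_homogeneousComponent Φ, map_sum, map_sum, map_zero] at h3
    rw [← h3]
    have : ∀ i ∈ Finset.range (Φ.totalDegree + 1),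
        homogeneousComponent (d * D) (aeval F (homogeneousComponent i Φ)) =
        if i = D then aeval F (homogeneousComponent D Φ) else 0 := by
      intro i _
      rw [homogeneousComponent_of_mem (m := d * D) (n := d * i)
        ((homogeneousComponent_isHomogeneous i Φ).aeval F hF)]
      by_cases hi : i = D
      · subst hi; simp
      · rw [if_neg, if_neg hi]
        intro h
        exact hi (Nat.eq_of_mul_eq_mul_left (by omega) h).symm
    rw [Finset.sum_congr rfl this, Finset.sum_ite_eq']
    split_ifs with h
    · rfl
    · exfalso
      apply hD
      apply homogeneousComponent_eq_zero
      simpa using h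
  refine ⟨D, homogeneousComponent D Φ * X 0,
    (homogeneousComponent_isHomogeneous D Φ).mul (isHomogeneous_X _ _), ?_, ?_⟩
  · exact mul_ne_zero hD (X_ne_zero 0)
  · rw [map_mul, h2, zero_mul]

theorem span_range_eq_Ik {σ V : Type*} [AddCommGroup V] [Module ℂ V]
    (ψ : V →ₗ[ℂ] MvPolynomial σ ℂ) (b : ℕ → V) (n : ℕ)
    (hb : ⊤ ≤ Submodule.span ℂ (b '' Set.Iio n)) :
    Ideal.span (Set.range ψ) = Ik (fun j => ψ (b j)) n := by
  apply le_antisymm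
  · rw [Ideal.span_le]
    rintro _ ⟨v, rfl⟩
    have hv := hb (Submodule.mem_top (x := v))
    induction hv using Submodule.span_induction with
    | mem x hx =>
      obtain ⟨j, hj, rfl⟩ := hx
      exact Ideal.subset_span ⟨j, hj, rfl⟩
    | zero => simp
    | add x y _ _ hx hy => rw [map_add]; exact add_mem hx hy
    | smul a x _ hx =>
      rw [map_smul, smul_eq_C_mul]
      exact Ideal.mul_mem_left _ _ hx
  · apply Ideal.span_mono
    rintro _ ⟨j, _, rfl⟩
    exact ⟨_, rfl⟩

theorem exists_pi (n : ℕ) : ∃ π : MvPolynomial (Fin (n + 1)) ℂ →ₐ[ℂ] MvPolynomial (Fin n) ℂ,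
    π (X 0) = 0 ∧ Function.Surjective π ∧ (∀ p, π p = 0 → ∃ q, p = X 0 * q) ∧
    (∀ {p e}, p.IsHomogeneous e → (π p).IsHomogeneous e) ∧
    (∀ (w : Fin n → ℂ) p, eval w (π p) = eval (Fin.cons 0 w : Fin (n + 1) → ℂ) p) := by
  let π : MvPolynomial (Fin (n + 1)) ℂ →ₐ[ℂ] MvPolynomial (Fin n) ℂ := aeval (Fin.cons 0 X)
  have hπX : ∀ p, π (rename Fin.succ p) = p := by
    intro p
    simp only [π, aeval_rename]
    have : ((Fin.cons 0 X : Fin (n + 1) → MvPolynomial (Fin n) ℂ) ∘ Fin.succ) = X := by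
      ext i; simp
    rw [this]; simp
  have hπ0 : π (X 0) = 0 := by simp [π]
  have hπs : Function.Surjective π := fun p => ⟨_, hπX p⟩
  have hsec : ∀ p, ∃ q, p = rename Fin.succ (π p) + X 0 * q := by
    intro p
    induction p using MvPolynomial.induction_on with
    | C a => exact ⟨0, by simp [π]⟩
    | add p q hp hq =>
      obtain ⟨a, ha⟩ := hp
      obtain ⟨b, hb⟩ := hq
      exact ⟨a + b, by rw [map_add, map_add]; linear_combination ha + hb⟩
    | mul_X p i hp =>
      obtain ⟨a, ha⟩ := hp
      refine Fin.cases ?_ (fun i => ?_) i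
      · exact ⟨p, by rw [map_mul, hπ0]; simp; ring⟩
      · refine ⟨a * X i.succ, ?_⟩
        have : π (X i.succ) = X i := by simp [π]
        rw [map_mul, this, map_mul, rename_X]
        linear_combination X i.succ * ha
  have hker : ∀ p, π p = 0 → ∃ q, p = X 0 * q := by
    intro p hp
    obtain ⟨q, hq⟩ := hsec p
    rw [hp] at hq
    exact ⟨q, by simpa using hq⟩
  have hπhom : ∀ {p e}, p.IsHomogeneous e → (π p).IsHomogeneous e := by
    intro p e hp
    have := hp.aeval (n := 1) (Fin.cons 0 X : Fin (n + 1) → MvPolynomial (Fin n) ℂ) (by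
      intro i
      refine Fin.cases ?_ (fun i => ?_) i
      · simpa using isHomogeneous_zero _ _ _
      · simpa using isHomogeneous_X _ _)
    rw [one_mul] at this
    exact this
  have hπev : ∀ (w : Fin n → ℂ) p, eval w (π p) = eval (Fin.cons 0 w : Fin (n + 1) → ℂ) p := by
    intro w p
    induction p using MvPolynomial.induction_on with
    | C a => simp [π]
    | add p q hp hq => simp [hp, hq]
    | mul_X p i hp =>
      rw [map_mul, map_mul, map_mul, hp]
      congr 1
      refine Fin.cases ?_ (fun i => ?_) i <;> simp [π]
  exact ⟨π, hπ0, hπs, hker, hπhom, hπev⟩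

theorem macaulay_aux (d : ℕ) (hd : 1 ≤ d) : ∀ (n : ℕ) (V : Type) [AddCommGroup V] [Module ℂ V]
    [FiniteDimensional ℂ V] (_ : Module.finrank ℂ V = n) (φ : V →ₗ[ℂ] MvPolynomial (Fin n) ℂ)
    (_ : ∀ v, (φ v).IsHomogeneous d)
    (_ : ∀ w : Fin n → ℂ, (∀ v, eval w (φ v) = 0) → w = 0),
    (∃ b : ℕ → V, ⊤ ≤ Submodule.span ℂ (b '' Set.Iio n) ∧
      ∀ k < n, ∀ h, φ (b k) * h ∈ Ik (fun j => φ (b j)) k → h ∈ Ik (fun j => φ (b j)) k) ∧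
    ∀ e p, n * (d - 1) + 1 ≤ e → p.IsHomogeneous e → p ∈ Ideal.span (Set.range φ) := by
  intro n
  induction n with
  | zero =>
    intro V _ _ _ hV φ hφ hz
    constructor
    · refine ⟨fun _ => 0, ?_, by simp⟩
      have : Subsingleton V := Module.finrank_zero_iff.1 hV
      intro x _
      rw [Subsingleton.elim x 0]
      exact zero_mem _
    · intro e p he hp
      have h0 := isHomogeneous_of_isEmpty _ _ p
      have : p = 0 := by
        by_contra hne
        have := hp.inj_right h0 hne
        omega
      rw [this]; exact zero_mem _
  | succ n ih =>
    intro V _ _ _ hV φ hφ hz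
    obtain ⟨π, hπ0, hπs, hker, hπhom, hπev⟩ := exists_pi n
    let e := Module.finBasisOfFinrankEq ℂ V hV
    obtain ⟨D, Φ, hΦhom, hΦ0, hΦ⟩ := exists_relation hd (fun i => π (φ (e i))) (fun i => hπhom (hφ _))
    obtain ⟨lam, hlam⟩ : ∃ lam, eval lam Φ ≠ 0 := by
      by_contra hcon
      push Not at hcon
      exact hΦ0 (hΦhom.eq_zero_of_forall_eval_eq_zero hcon)
    have hlam0 : lam ≠ 0 := by
      rintro rfl
      have := eval_smul_hom hΦhom 0 0
      apply hlam
      simpa using this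
    let Λ : V →ₗ[ℂ] ℂ := e.constr ℂ lam
    have hΛe : ∀ i, Λ (e i) = lam i := fun i => by simp [Λ]
    obtain ⟨v0, hv0⟩ : ∃ v0, Λ v0 = 1 := by
      obtain ⟨i, hi⟩ := Function.ne_iff.1 hlam0
      refine ⟨(lam i)⁻¹ • e i, ?_⟩
      rw [map_smul, hΛe, smul_eq_mul, inv_mul_cancel₀ hi]
    let V' := LinearMap.ker Λ
    have hV' : Module.finrank ℂ V' = n := by
      have h1 := LinearMap.finrank_range_add_finrank_ker Λ
      have h2 : LinearMap.range Λ = ⊤ := by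
        rw [LinearMap.range_eq_top]
        intro c
        exact ⟨c • v0, by rw [map_smul, hv0]; simp⟩
      rw [h2, finrank_top, Module.finrank_self, hV] at h1
      change 1 + Module.finrank ℂ V' = n + 1 at h1
      omega
    have hdec : ∀ v, v - Λ v • v0 ∈ V' := by
      intro v
      rw [LinearMap.mem_ker, map_sub, map_smul, hv0]; simp
    let φ' : V' →ₗ[ℂ] MvPolynomial (Fin n) ℂ := π.toLinearMap ∘ₗ φ ∘ₗ V'.subtype
    have hφ' : ∀ v : V', φ' v = π (φ v) := fun v => rfl
    obtain ⟨⟨b', hb's, hb'r⟩, hbound⟩ := ih V' hV' φ' (fun v => hπhom (hφ _)) (by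
      intro w hw
      have h1 : ∀ v, eval w (π (φ v)) = eval w (π (φ v0)) * Λ v := by
        intro v
        have := hw ⟨_, hdec v⟩
        rw [hφ'] at this
        simp only [map_sub, map_smul, smul_eval] at this
        linear_combination this
      have h2 : eval w (π (φ v0)) ^ (D + 1) * eval lam Φ = 0 := by
        rw [← eval_smul_hom hΦhom]
        have h3 := congrArg (eval w) hΦ
        rw [map_zero] at h3
        rw [← h3]
        have h4 : (fun i => eval w (π (φ v0)) * lam i) = fun i => eval w (π (φ (e i))) := by
          ext i; rw [h1 (e i), hΛe]
        rw [h4]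
        rw [← aeval_eq_eval, ← aeval_eq_eval, ← AlgHom.comp_apply, comp_aeval]
      have h3 : eval w (π (φ v0)) = 0 := by
        rcases mul_eq_zero.1 h2 with h | h
        · exact pow_eq_zero_iff (by omega) |>.1 h
        · exact absurd h hlam
      have h4 := hz (Fin.cons 0 w) (by
        intro v
        rw [← hπev, h1, h3, zero_mul])
      ext i
      have := congrFun h4 i.succ
      simpa using this)
    obtain ⟨b, hb1, hbn⟩ : ∃ b : ℕ → V, (∀ j < n, b j = b' j) ∧ b n = v0 :=
      ⟨fun j => if j < n then (b' j : V) else v0, fun j hj => by simp [hj], by simp⟩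
    let G : ℕ → MvPolynomial (Fin (n + 1)) ℂ := fun j => φ (b j)
    have hGn : G n = φ v0 := by simp only [G, hbn]
    have hIkG : ∀ k ≤ n, Ik (fun j => φ' (b' j)) k = Ik (fun j => π (G j)) k := by
      intro k hk
      unfold Ik
      congr 1
      apply Set.image_congr
      intro j hj
      simp only [G, hφ']
      rw [hb1 j (lt_of_lt_of_le hj hk)]
    have hlift := lift_regular π.toRingHom hπs (X 0) (isHomogeneous_X _ _) (X_ne_zero 0) hker hπ0 G d n
      (fun i _ => hφ _) (by
        intro k hk h hh
        have h1 := hb'r k hk h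
        rw [hIkG k hk.le] at h1
        apply h1
        have : φ' (b' k) = π (G k) := by simp only [G, hφ']; rw [hb1 k hk]
        rw [this]
        exact hh)
    have hbspan : ⊤ ≤ Submodule.span ℂ (b '' Set.Iio (n + 1)) := by
      intro v _
      have h1 : (⟨_, hdec v⟩ : V') ∈ Submodule.span ℂ (b' '' Set.Iio n) := hb's Submodule.mem_top
      have h2 := Submodule.mem_map_of_mem (f := V'.subtype) h1
      rw [Submodule.map_span] at h2
      have h3 : v - Λ v • v0 ∈ Submodule.span ℂ (b '' Set.Iio (n + 1)) := by
        refine Submodule.span_mono ?_ h2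
        rintro _ ⟨_, ⟨j, hj, rfl⟩, rfl⟩
        have hj : j < n := hj
        exact ⟨j, Set.mem_Iio.2 (by omega), hb1 j hj⟩
      have h4 : v0 ∈ Submodule.span ℂ (b '' Set.Iio (n + 1)) :=
        Submodule.subset_span ⟨n, by simp, hbn⟩
      have := add_mem h3 (Submodule.smul_mem _ (Λ v) h4)
      simpa using this
    have hall : Ideal.span (Set.range φ) = Ik G n ⊔ Ideal.span {G n} := by
      rw [span_range_eq_Ik φ b _ hbspan, Ik_succ]
    obtain ⟨K, hK⟩ := null_bound (Ideal.span (Set.range φ)) (by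
      intro w hw
      exact hz w (fun v => hw _ (Ideal.subset_span ⟨v, rfl⟩)))
    have hone := oneDim (I := Ik G n) (l := X 0) (g := G n) (d := d) (s := n * (d - 1) + 1) (K := K)
      (homI_span _ d (by rintro _ ⟨j, _, rfl⟩; exact hφ _)) (isHomogeneous_X _ _) (hφ _)
      (hlift n le_rfl).1 (by
        intro a p ha hp
        have h1 := hbound a (π p) ha (hπhom hp)
        rw [span_range_eq_Ik φ' b' n hb's, hIkG n le_rfl] at h1
        have h2 : (Ik G n).map π.toRingHom = Ik (fun i => π (G i)) n := by
          simp only [Ik, Ideal.map_span, Set.image_image]; rfl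
        rw [← h2, Ideal.mem_map_iff_of_surjective π.toRingHom hπs] at h1
        obtain ⟨i, hi, hip⟩ := h1
        obtain ⟨q, hq⟩ := hker (p - i) (by rw [map_sub]; exact sub_eq_zero.2 hip.symm)
        have : p = i + q * X 0 := by linear_combination hq
        rw [this]
        exact add_mem (Ideal.mem_sup_left hi)
          (Ideal.mem_sup_right (Ideal.mem_span_singleton'.2 ⟨q, rfl⟩)))
      (by rw [← hall]; exact hK)
    refine ⟨⟨b, hbspan, ?_⟩, ?_⟩
    · intro k hk h hh
      rcases Nat.lt_succ_iff_lt_or_eq.1 hk with hk | rfl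
      · exact (hlift k hk.le).2 hk h hh
      · exact hone.1 h hh
    · intro a p ha hp
      rw [hall]
      have : (n + 1) * (d - 1) = n * (d - 1) + (d - 1) := by ring
      exact hone.2 a p (by omega) (by omega) hp

/-- Macaulay bound: forms of degree `d` without nontrivial common zero. -/
theorem macaulay {n d : ℕ} (hd : 1 ≤ d) (g : Fin n → MvPolynomial (Fin n) ℂ)
    (hg : ∀ i, (g i).IsHomogeneous d)
    (hz : ∀ w : Fin n → ℂ, (∀ i, eval w (g i) = 0) → w = 0)
    (e : ℕ) (p : MvPolynomial (Fin n) ℂ) (he : n * (d - 1) + 1 ≤ e + d) (hp : p.IsHomogeneous (e + d)) :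
    ∃ h : Fin n → MvPolynomial (Fin n) ℂ, (∀ i, (h i).IsHomogeneous e) ∧ p = ∑ i, g i * h i := by
  let φ : (Fin n → ℂ) →ₗ[ℂ] MvPolynomial (Fin n) ℂ := Fintype.linearCombination ℂ g
  have hφ : ∀ v, φ v = ∑ i, v i • g i := fun v => Fintype.linearCombination_apply ℂ g v
  have hφe : ∀ i, φ (Pi.single i 1) = g i := fun i => by simp [φ]
  have h1 := (macaulay_aux d hd n (Fin n → ℂ) (by simp) φ (by
    intro v
    rw [hφ]
    refine IsHomogeneous.sum _ _ _ fun i _ => ?_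
    rw [smul_eq_C_mul]
    exact (hg i).C_mul _) (by
    intro w hw
    apply hz
    intro i
    rw [← hφe]; exact hw _)).2 (e + d) p he hp
  have h2 : Ideal.span (Set.range φ) ≤ Ideal.span (Set.range g) := by
    rw [Ideal.span_le]
    rintro _ ⟨v, rfl⟩
    rw [hφ]
    refine sum_mem fun i _ => ?_
    rw [smul_eq_C_mul]
    exact Ideal.mul_mem_left _ _ (Ideal.subset_span ⟨i, rfl⟩)
  obtain ⟨c, hc⟩ := (Ideal.mem_span_range_iff_exists_fun).1 (h2 h1)
  refine ⟨fun i => homogeneousComponent e (c i), fun i => homogeneousComponent_isHomogeneous _ _, ?_⟩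
  rw [← homogeneousComponent_eq_self hp, ← hc, map_sum]
  refine Finset.sum_congr rfl fun i _ => ?_
  rw [mul_comm (c i), add_comm e d, hc_mul (hg i)]

section geometry

variable {n : ℕ}


theorem small_eps {ι : Type*} (S : Finset ι) (s c : ι → ℝ) (hs : ∀ a ∈ S, 0 < s a) :
    ∃ ε : ℝ, 0 < ε ∧ ∀ t, 0 ≤ t → t ≤ ε → ∀ a ∈ S, t * c a < s a := by
  classical
  induction S using Finset.induction_on with
  | empty => exact ⟨1, one_pos, by simp⟩
  | insert a S ha ih =>
    obtain ⟨ε, hε, h⟩ := ih (fun b hb => hs b (Finset.mem_insert_of_mem hb))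
    have hsa := hs a (Finset.mem_insert_self _ _)
    have hpos : 0 < |c a| + 1 := by positivity
    refine ⟨min ε (s a / (2 * (|c a| + 1))), lt_min hε (by positivity), ?_⟩
    intro t ht0 ht b hb
    rcases Finset.mem_insert.1 hb with rfl | hb
    · have h1 : t ≤ s b / (2 * (|c b| + 1)) := ht.trans (min_le_right _ _)
      rw [le_div_iff₀ (by positivity)] at h1
      have h2 : t * c b ≤ t * |c b| := mul_le_mul_of_nonneg_left (le_abs_self _) ht0
      nlinarith
    · exact h t ht0 (ht.trans (min_le_left _ _)) b hb

/-- Feasible functionals. -/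
def Feas (S : Finset (Fin n →₀ ℕ)) (y : (Fin n → ℝ) →ₗ[ℝ] ℝ) : Prop := ∀ a ∈ S, y (toR a) ≤ 1

/-- Active set. -/
def Act (S : Finset (Fin n →₀ ℕ)) (y : (Fin n → ℝ) →ₗ[ℝ] ℝ) : Set (Fin n →₀ ℕ) :=
  {a | a ∈ S ∧ y (toR a) = 1}

/-- Vertices of the dual polyhedron. -/
def Vert (S : Finset (Fin n →₀ ℕ)) (y : (Fin n → ℝ) →ₗ[ℝ] ℝ) : Prop :=
  Feas S y ∧ Submodule.span ℝ (toR '' Act S y) = ⊤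

theorem vert_finite (S : Finset (Fin n →₀ ℕ)) : {y | Vert S y}.Finite := by
  apply Set.Finite.of_finite_image (f := Act S)
  · apply Set.Finite.subset (S.finite_toSet.finite_subsets)
    rintro _ ⟨y, _, rfl⟩
    exact fun a ha => ha.1
  · intro y hy y' hy' h
    have h : Act S y = Act S y' := h
    apply LinearMap.ext_on hy.2
    rintro _ ⟨a, ha, rfl⟩
    rw [ha.2]
    rw [h] at ha
    exact ha.2.symm

theorem tilt {S : Finset (Fin n →₀ ℕ)} {y : (Fin n → ℝ) →ₗ[ℝ] ℝ} (hy : Feas S y)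
    (z : (Fin n → ℝ) →ₗ[ℝ] ℝ) (hz : ∀ a ∈ Act S y, 0 ≤ z (toR a)) :
    ∃ δ : ℝ, 0 < δ ∧ Feas S (y - δ • z) ∧
      ∀ a ∈ S, (y - δ • z) (toR a) = 1 ↔ (a ∈ Act S y ∧ z (toR a) = 0) := by
  classical
  obtain ⟨δ, hδ, h⟩ := small_eps (S.filter (fun a => y (toR a) ≠ 1)) (fun a => 1 - y (toR a))
    (fun a => - z (toR a)) (by
      intro a ha
      rw [Finset.mem_filter] at ha
      have := lt_of_le_of_ne (hy a ha.1) ha.2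
      linarith)
  have h1 : ∀ a ∈ S, y (toR a) ≠ 1 → (y - δ • z) (toR a) < 1 := by
    intro a ha hne
    have := h δ hδ.le le_rfl a (Finset.mem_filter.2 ⟨ha, hne⟩)
    simp only [LinearMap.sub_apply, LinearMap.smul_apply, smul_eq_mul]
    linarith
  have h2 : ∀ a, (y - δ • z) (toR a) = y (toR a) - δ * z (toR a) := fun a => rfl
  refine ⟨δ, hδ, ?_, ?_⟩
  · intro a ha
    by_cases hne : y (toR a) = 1
    · rw [h2, hne]
      have := hz a ⟨ha, hne⟩
      nlinarith
    · exact (h1 a ha hne).le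
  · intro a ha
    by_cases hne : y (toR a) = 1
    · rw [h2, hne]
      constructor
      · intro h3
        refine ⟨⟨ha, hne⟩, ?_⟩
        have : δ * z (toR a) = 0 := by linarith
        exact (mul_eq_zero.1 this).resolve_left hδ.ne'
      · rintro ⟨_, h3⟩
        rw [h3]; ring
    · constructor
      · intro h3; exact absurd h3 (h1 a ha hne).ne
      · rintro ⟨h3, _⟩; exact absurd h3.2 hne

/-- pure powers are in the support -/
def Conv (S : Finset (Fin n →₀ ℕ)) : Prop := ∀ i, ∃ k : ℕ, 1 ≤ k ∧ Finsupp.single i k ∈ S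

theorem toR_single (i : Fin n) (k : ℕ) :
    toR (Finsupp.single i k) = (k : ℝ) • (Pi.single i (1 : ℝ) : Fin n → ℝ) := by
  ext j
  by_cases h : j = i
  · subst h; simp [toR]
  · simp [toR, h, Finsupp.single_apply, Ne.symm h]

theorem lin_eq_sum (y : (Fin n → ℝ) →ₗ[ℝ] ℝ) (x : Fin n → ℝ) :
    y x = ∑ i, x i * y (Pi.single i 1) := by
  conv_lhs => rw [pi_eq_sum_univ' x]
  simp [map_sum]

theorem exists_max {S : Finset (Fin n →₀ ℕ)} (hS : Conv S) (x : Fin n → ℝ) (hx : ∀ i, 0 < x i) :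
    ∃ y, Feas S y ∧ ∀ z, Feas S z → z x ≤ y x := by
  let L : (Fin n → ℝ) → ((Fin n → ℝ) →ₗ[ℝ] ℝ) := fun z => ∑ i, z i • LinearMap.proj i
  have hL : ∀ z w, L z w = ∑ i, z i * w i := by intro z w; simp [L]
  have hLs : ∀ y, L (fun i => y (Pi.single i 1)) = y := by
    intro y
    ext i
    simp [hL, Pi.single_apply]
  have hcont : ∀ w, Continuous (fun z => L z w) := by
    intro w; simp only [hL]; fun_prop
  let C : Set (Fin n → ℝ) := {z | Feas S (L z) ∧ 0 ≤ L z x}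
  have hle1 : ∀ z, Feas S (L z) → ∀ i, z i ≤ 1 := by
    intro z hz i
    obtain ⟨k, hk, hkS⟩ := hS i
    have h1 := hz _ hkS
    rw [toR_single, map_smul, hL] at h1
    simp [Pi.single_apply] at h1
    have hk : (1 : ℝ) ≤ k := by exact_mod_cast hk
    by_contra hcon
    push Not at hcon
    nlinarith
  have hCc : IsCompact C := by
    apply IsCompact.of_isClosed_subset (isCompact_Icc (a := fun i => - (∑ j, x j) / x i) (b := fun _ => (1 : ℝ)))
    · have : C = (⋂ a ∈ S, {z | L z (toR a) ≤ 1}) ∩ {z | 0 ≤ L z x} := by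
        ext z; simp [C, Feas]
      rw [this]
      apply IsClosed.inter
      · exact isClosed_biInter fun a _ => isClosed_le (hcont _) continuous_const
      · exact isClosed_le continuous_const (hcont _)
    · rintro z ⟨hz, hz0⟩
      refine ⟨fun i => ?_, hle1 z hz⟩
      show - (∑ j, x j) / x i ≤ z i
      rw [div_le_iff₀ (hx i)]
      rw [hL] at hz0
      have : ∑ j, z j * x j ≤ z i * x i + ∑ j, x j := by
        rw [← Finset.add_sum_erase _ _ (Finset.mem_univ i)]
        have h3 : ∑ j ∈ Finset.univ.erase i, z j * x j ≤ ∑ j ∈ Finset.univ.erase i, x j := by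
          refine Finset.sum_le_sum fun j _ => ?_
          have := hle1 z hz j
          nlinarith [hx j]
        have h4 : ∑ j ∈ Finset.univ.erase i, x j ≤ ∑ j, x j :=
          Finset.sum_le_sum_of_subset_of_nonneg (Finset.erase_subset _ _) fun j _ _ => (hx j).le
        linarith
      linarith
  have hCn : C.Nonempty := ⟨0, by
    constructor
    · intro a _; simp [hL]
    · simp [hL]⟩
  obtain ⟨z, hzC, hmax⟩ := hCc.exists_isMaxOn hCn (hcont x).continuousOn
  refine ⟨L z, hzC.1, fun w hw => ?_⟩
  by_cases h0 : 0 ≤ w x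
  · have h1 : (fun i => w (Pi.single i 1)) ∈ C := by
      refine ⟨?_, ?_⟩ <;> rw [hLs] <;> assumption
    have := hmax h1
    simpa [hLs] using this
  · have := hzC.2
    linarith

theorem exists_vert {S : Finset (Fin n →₀ ℕ)} (hS : Conv S) (x : Fin n → ℝ) (hx : ∀ i, 0 < x i) :
    ∃ y, Vert S y ∧ ∀ z, Feas S z → z x ≤ y x := by
  classical
  let T : Set ℕ := {r | ∃ y, Feas S y ∧ (∀ z, Feas S z → z x ≤ y x) ∧
    Module.finrank ℝ (Submodule.span ℝ (toR '' Act S y)) = r}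
  have hTn : T.Nonempty := by
    obtain ⟨y, h1, h2⟩ := exists_max hS x hx
    exact ⟨_, y, h1, h2, rfl⟩
  have hTb : BddAbove T := by
    refine ⟨n, ?_⟩
    rintro r ⟨y, _, _, rfl⟩
    have := Submodule.finrank_le (Submodule.span ℝ (toR '' Act S y))
    simpa using this
  obtain ⟨y, hy, hmax, hr⟩ := Nat.sSup_mem hTn hTb
  refine ⟨y, ⟨hy, ?_⟩, hmax⟩
  by_contra htop
  obtain ⟨z0, hz0, hker0⟩ := Submodule.exists_le_ker_of_lt_top _ (lt_top_iff_ne_top.2 htop)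
  -- choose the sign
  obtain ⟨z, hker, i, hi⟩ : ∃ z : (Fin n → ℝ) →ₗ[ℝ] ℝ,
      Submodule.span ℝ (toR '' Act S y) ≤ LinearMap.ker z ∧ ∃ i, 0 < z (Pi.single i 1) := by
    have : ∃ i, z0 (Pi.single i 1) ≠ 0 := by
      by_contra hcon
      push Not at hcon
      apply hz0
      ext i
      simpa using hcon i
    obtain ⟨i, hi⟩ := this
    rcases lt_or_gt_of_ne hi with h | h
    · refine ⟨-z0, ?_, i, by simpa using h⟩
      intro v hv
      have := hker0 hv
      rw [LinearMap.mem_ker] at this ⊢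
      simp [this]
    · exact ⟨z0, hker0, i, h⟩
  have hact : ∀ a ∈ Act S y, z (toR a) = 0 := fun a ha =>
    hker (Submodule.subset_span ⟨a, ha, rfl⟩)
  have hzx : 0 ≤ z x := by
    obtain ⟨δ, hδ, hf, _⟩ := tilt hy z (fun a ha => (hact a ha).ge)
    have := hmax _ hf
    simp only [LinearMap.sub_apply, LinearMap.smul_apply, smul_eq_mul] at this
    by_contra hcon
    push Not at hcon
    nlinarith
  let S' := S.filter (fun a => 0 < z (toR a))
  have hS'n : S'.Nonempty := by
    obtain ⟨k, hk, hkS⟩ := hS i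
    refine ⟨_, Finset.mem_filter.2 ⟨hkS, ?_⟩⟩
    rw [toR_single, map_smul, smul_eq_mul]
    have : (0 : ℝ) < k := by exact_mod_cast hk
    positivity
  obtain ⟨a, ha, hmin⟩ := S'.exists_min_image (fun a => (1 - y (toR a)) / z (toR a)) hS'n
  rw [Finset.mem_filter] at ha
  have hyz : ∀ t b, (y + t • z) (toR b) = y (toR b) + t * z (toR b) := fun t b => rfl
  set t := (1 - y (toR a)) / z (toR a) with ht
  have ht0 : 0 ≤ t := div_nonneg (by linarith [hy a ha.1]) ha.2.le
  have hta : t * z (toR a) = 1 - y (toR a) := div_mul_cancel₀ _ ha.2.ne'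
  have hfe : Feas S (y + t • z) := by
    intro b hb
    rw [hyz]
    by_cases hbz : 0 < z (toR b)
    · have := hmin b (Finset.mem_filter.2 ⟨hb, hbz⟩)
      rw [le_div_iff₀ hbz] at this
      linarith
    · push Not at hbz
      have := hy b hb
      nlinarith
  have hmem : Module.finrank ℝ (Submodule.span ℝ (toR '' Act S (y + t • z))) ∈ T := by
    refine ⟨_, hfe, ?_, rfl⟩
    intro w hw
    have h1 := hmax w hw
    have : (y + t • z) x = y x + t * z x := rfl
    rw [this]
    nlinarith
  have hle := le_csSup hTb hmem
  rw [← hr] at hle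
  have hlt : Submodule.span ℝ (toR '' Act S y) < Submodule.span ℝ (toR '' Act S (y + t • z)) := by
    apply lt_of_le_of_ne
    · apply Submodule.span_mono
      apply Set.image_mono
      intro b hb
      refine ⟨hb.1, ?_⟩
      rw [hyz, hact b hb, hb.2]; ring
    · intro heq
      have h1 : toR a ∈ Submodule.span ℝ (toR '' Act S (y + t • z)) := by
        apply Submodule.subset_span
        refine ⟨a, ⟨ha.1, ?_⟩, rfl⟩
        rw [hyz, hta]; ring
      rw [← heq] at h1
      have := hker h1
      rw [LinearMap.mem_ker] at this
      linarith [ha.2]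
  have := Submodule.finrank_lt_finrank_of_lt hlt
  omega

theorem exists_generic (U : Set ((Fin n → ℝ) →ₗ[ℝ] ℝ)) (hU : U.Finite) :
    ∃ p : Fin n → ℝ, (∀ i, 0 < p i) ∧ ∀ y ∈ U, ∀ y' ∈ U, y p = y' p → y = y' := by
  classical
  let Q : ((Fin n → ℝ) →ₗ[ℝ] ℝ) → Polynomial ℝ := fun y =>
    ∑ i : Fin n, Polynomial.monomial (i : ℕ) (y (Pi.single i 1))
  have hQ : ∀ y t, (Q y).eval t = y (fun i => t ^ (i : ℕ)) := by
    intro y t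
    rw [lin_eq_sum]
    simp [Q, Polynomial.eval_finset_sum, mul_comm]
  have hQ0 : ∀ y, Q y = 0 → y = 0 := by
    intro y h
    ext i
    have := congrArg (fun q => q.coeff (i : ℕ)) h
    simp [Q, Polynomial.finset_sum_coeff, Polynomial.coeff_monomial, Fin.val_inj] at this
    simpa using this
  have hfin : (⋃ y ∈ U, ⋃ y' ∈ U, {t | y ≠ y' ∧ (Q (y - y')).eval t = 0}).Finite := by
    refine hU.biUnion fun y _ => hU.biUnion fun y' _ => ?_
    by_cases h : y = y'
    · simp [h]
    · have hne : Q (y - y') ≠ 0 := fun h0 => h (sub_eq_zero.1 (hQ0 _ h0))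
      refine ((Q (y - y')).roots.toFinset.finite_toSet).subset ?_
      rintro t ⟨_, ht⟩
      simpa [hne] using ht
  obtain ⟨t, ht, htn⟩ := (Set.Ioi_infinite (0 : ℝ)).exists_notMem_finite hfin
  refine ⟨fun i => t ^ (i : ℕ), fun i => pow_pos ht _, ?_⟩
  intro y hy y' hy' h
  by_contra hne
  apply htn
  simp only [Set.mem_iUnion]
  refine ⟨y, hy, y', hy', hne, ?_⟩
  rw [hQ, LinearMap.sub_apply, h, sub_self]

theorem poly_le {f : MvPolynomial (Fin n) ℂ} {y : (Fin n → ℝ) →ₗ[ℝ] ℝ} (hy : Feas f.support y)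
    {x : Fin n → ℝ} (hx : x ∈ newtonPolytope f) : y x ≤ 1 := by
  have : newtonPolytope f ⊆ {x | y x ≤ 1} := by
    apply convexHull_min
    · rintro x (hx | ⟨a, ha, rfl⟩)
      · rw [Set.mem_singleton_iff] at hx; subst hx; simp
      · exact hy a ha
    · exact convex_halfSpace_le y.isLinear 1
  exact this hx

theorem poly_lt {f : MvPolynomial (Fin n) ℂ} {y : (Fin n → ℝ) →ₗ[ℝ] ℝ}
    (hy : ∀ a ∈ f.support, y (toR a) < 1)
    {x : Fin n → ℝ} (hx : x ∈ newtonPolytope f) : y x < 1 := by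
  have : newtonPolytope f ⊆ {x | y x < 1} := by
    apply convexHull_min
    · rintro x (hx | ⟨a, ha, rfl⟩)
      · rw [Set.mem_singleton_iff] at hx; subst hx; simp
      · exact hy a ha
    · exact convex_halfSpace_lt y.isLinear 1
  exact this hx

theorem mem_poly {f : MvPolynomial (Fin n) ℂ} {a : Fin n →₀ ℕ} (ha : a ∈ f.support) :
    toR a ∈ newtonPolytope f := subset_convexHull _ _ (Or.inr ⟨a, ha, rfl⟩)

theorem zero_mem_poly {f : MvPolynomial (Fin n) ℂ} :
    (0 : Fin n → ℝ) ∈ newtonPolytope f := subset_convexHull _ _ (Or.inl rfl)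

theorem isFace_of_feas {f : MvPolynomial (Fin n) ℂ} {y : (Fin n → ℝ) →ₗ[ℝ] ℝ}
    (hy : Feas f.support y) {a : Fin n →₀ ℕ} (ha : a ∈ Act f.support y) :
    NBFace f {x ∈ newtonPolytope f | y x = 1} := by
  refine ⟨⟨⟨toR a, mem_poly ha.1, ha.2⟩, y, 1, fun x hx => poly_le hy hx, rfl⟩, ?_⟩
  rintro ⟨_, h⟩
  simp at h

/-- A simplicial chart at a vertex. -/
def Chart (S : Finset (Fin n →₀ ℕ)) (y : (Fin n → ℝ) →ₗ[ℝ] ℝ)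
    (v : Module.Basis (Fin n) ℝ (Fin n → ℝ)) : Prop :=
  (∀ i, ∃ a ∈ Act S y, v i = toR a) ∧ ∀ a ∈ Act S y, ∀ i, 0 ≤ v.coord i (toR a)

theorem exists_chart (hn : 1 ≤ n) {f : MvPolynomial (Fin n) ℂ}
    (hsimp : ∀ Δ : Set (Fin n → ℝ), IsFace (newtonPolytope f) Δ →
      Δ ≠ newtonPolytope f → IsSimplex Δ)
    {y : (Fin n → ℝ) →ₗ[ℝ] ℝ} (hy : Vert f.support y) :
    ∃ v : Module.Basis (Fin n) ℝ (Fin n → ℝ), Chart f.support y v := by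
  classical
  have hane : (Act f.support y).Nonempty := by
    by_contra hcon
    rw [Set.not_nonempty_iff_eq_empty] at hcon
    have h2 := hy.2
    rw [hcon] at h2
    simp at h2
    have : Nontrivial (Fin n → ℝ) := by
      have : Nonempty (Fin n) := ⟨⟨0, hn⟩⟩
      infer_instance
    exact bot_ne_top h2
  obtain ⟨a0, ha0⟩ := hane
  have hF := isFace_of_feas hy.1 ha0
  obtain ⟨k, p, hp, hΔ⟩ := hsimp _ hF.1 (by
    intro h
    have h0 : (0 : Fin n → ℝ) ∈ newtonPolytope f := zero_mem_poly
    rw [← h] at h0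
    exact hF.2 h0)
  have hpΔ : ∀ i, p i ∈ newtonPolytope f ∧ y (p i) = 1 := by
    intro i
    have : p i ∈ convexHull ℝ (Set.range p) := subset_convexHull _ _ ⟨i, rfl⟩
    rw [← hΔ] at this
    exact this
  have hli : LinearIndependent ℝ p := by
    rw [Fintype.linearIndependent_iff]
    intro g hg i
    rw [affineIndependent_iff] at hp
    refine hp Finset.univ g ?_ hg i (Finset.mem_univ _)
    have := congrArg y hg
    simpa [map_sum, hpΔ] using this
  have hhull : ∀ a ∈ Act f.support y, toR a ∈ convexHull ℝ (Set.range p) := by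
    intro a ha
    rw [← hΔ]
    exact ⟨mem_poly ha.1, ha.2⟩
  have hspan : ⊤ ≤ Submodule.span ℝ (Set.range p) := by
    rw [← hy.2, Submodule.span_le]
    rintro _ ⟨a, ha, rfl⟩
    exact convexHull_min Submodule.subset_span (Submodule.convex _) (hhull a ha)
  let b := Module.Basis.mk hli hspan
  have hcard : k + 1 = n := by
    have := Module.finrank_eq_card_basis b
    simpa using this.symm
  subst hcard
  have hb : ∀ i, b i = p i := fun i => by simp [b]
  have hnn : ∀ x ∈ convexHull ℝ (Set.range p), ∀ i, 0 ≤ b.coord i x := by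
    intro x hx i
    have : convexHull ℝ (Set.range p) ⊆ {x | 0 ≤ b.coord i x} := by
      apply convexHull_min
      · rintro _ ⟨j, rfl⟩
        rw [Set.mem_ofPred_eq, ← hb, Module.Basis.coord_apply, Module.Basis.repr_self]
        by_cases h : j = i
        · simp [h]
        · simp [h]
      · exact convex_halfSpace_ge (b.coord i).isLinear 0
    exact this hx
  refine ⟨b, ?_, fun a ha i => hnn _ (hhull a ha) i⟩
  intro i
  let z : (Fin (k+1) → ℝ) →ₗ[ℝ] ℝ := ∑ j ∈ Finset.univ.erase i, b.coord j
  have hz : ∀ x, z x = ∑ j ∈ Finset.univ.erase i, b.coord j x := by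
    intro x; simp [z]
  have hzn : ∀ a ∈ Act f.support y, 0 ≤ z (toR a) := by
    intro a ha
    rw [hz]
    exact Finset.sum_nonneg fun j _ => hnn _ (hhull a ha) j
  obtain ⟨δ, hδ, hfe, hiff⟩ := tilt hy.1 z hzn
  have hex : ∃ a ∈ f.support, (y - δ • z) (toR a) = 1 := by
    by_contra hcon
    push Not at hcon
    have := poly_lt (fun a ha => lt_of_le_of_ne (hfe a ha) (hcon a ha)) (hpΔ i).1
    have hzp : z (p i) = 0 := by
      rw [hz]
      refine Finset.sum_eq_zero fun j hj => ?_
      rw [← hb, Module.Basis.coord_apply, Module.Basis.repr_self]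
      simp [(Finset.ne_of_mem_erase hj).symm]
    simp [hzp, (hpΔ i).2] at this
  obtain ⟨a, ha, h1⟩ := hex
  obtain ⟨hact, hz0⟩ := (hiff a ha).1 h1
  refine ⟨a, hact, ?_⟩
  have hzero : ∀ j, j ≠ i → b.coord j (toR a) = 0 := by
    intro j hj
    rw [hz] at hz0
    exact (Finset.sum_eq_zero_iff_of_nonneg (fun j _ => hnn _ (hhull a hact) j)).1 hz0 j
      (Finset.mem_erase.2 ⟨hj, Finset.mem_univ _⟩)
  have hsum : toR a = b.coord i (toR a) • b i := by
    conv_lhs => rw [← b.sum_repr (toR a)]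
    rw [Finset.sum_eq_single i]
    · rfl
    · intro j _ hj
      have := hzero j hj
      rw [Module.Basis.coord_apply] at this
      rw [this, zero_smul]
    · simp
  have h5 := congrArg y hsum
  rw [hact.2, map_smul, hb, (hpΔ i).2] at h5
  simp only [smul_eq_mul, mul_one] at h5
  rw [hsum, ← h5, one_smul]

section chart
variable {S : Finset (Fin n →₀ ℕ)} {y : (Fin n → ℝ) →ₗ[ℝ] ℝ}
  {v : Module.Basis (Fin n) ℝ (Fin n → ℝ)}

theorem Chart.y_v (h : Chart S y v) (i : Fin n) : y (v i) = 1 := by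
  obtain ⟨a, ha, he⟩ := h.1 i
  rw [he, ha.2]

theorem Chart.y_eq (h : Chart S y v) (x : Fin n → ℝ) : y x = ∑ i, v.coord i x := by
  conv_lhs => rw [← v.sum_repr x]
  rw [map_sum]
  simp only [map_smul, h.y_v, smul_eq_mul, mul_one, Module.Basis.coord_apply]

theorem Chart.v_nonneg (h : Chart S y v) (i j : Fin n) : 0 ≤ v i j := by
  obtain ⟨a, ha, he⟩ := h.1 i
  rw [he]
  simp [toR]

/-- `x` lies in the (perturbed) cone of the chart. -/
def Good (v : Module.Basis (Fin n) ℝ (Fin n → ℝ)) (p x : Fin n → ℝ) : Prop :=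
  ∀ i, 0 ≤ v.coord i x ∧ (v.coord i p < 0 → 0 < v.coord i x)

theorem Good.le (h : Chart S y v) {p x : Fin n → ℝ} (hg : Good v p x)
    {y' : (Fin n → ℝ) →ₗ[ℝ] ℝ} (hy' : Feas S y') : y' x ≤ y x := by
  rw [h.y_eq]
  conv_lhs => rw [← v.sum_repr x]
  rw [map_sum]
  refine Finset.sum_le_sum fun i _ => ?_
  obtain ⟨a, ha, he⟩ := h.1 i
  have h1 := hy' a ha.1
  rw [map_smul, he, smul_eq_mul]
  have := (hg i).1
  rw [Module.Basis.coord_apply] at *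
  nlinarith

theorem Good.le_p (h : Chart S y v) {p x : Fin n → ℝ} (hg : Good v p x)
    {y' : (Fin n → ℝ) →ₗ[ℝ] ℝ} (hy' : Feas S y') (he : y' x = y x) : y' p ≤ y p := by
  have hle : ∀ i, y' (v i) ≤ 1 := by
    intro i
    obtain ⟨a, ha, he⟩ := h.1 i
    rw [he]; exact hy' a ha.1
  have h1 : ∀ x, y x - y' x = ∑ i, v.coord i x * (1 - y' (v i)) := by
    intro x
    rw [h.y_eq]
    have : y' x = ∑ i, v.coord i x * y' (v i) := by
      conv_lhs => rw [← v.sum_repr x]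
      rw [map_sum]
      simp only [map_smul, smul_eq_mul, Module.Basis.coord_apply]
    rw [this, ← Finset.sum_sub_distrib]
    exact Finset.sum_congr rfl fun i _ => by ring
  have h2 := h1 x
  rw [he, sub_self] at h2
  have h3 := (Finset.sum_eq_zero_iff_of_nonneg (fun i _ =>
    mul_nonneg (hg i).1 (by linarith [hle i]))).1 h2.symm
  have h4 : 0 ≤ ∑ i, v.coord i p * (1 - y' (v i)) := by
    refine Finset.sum_nonneg fun i _ => ?_
    by_cases hp : v.coord i p < 0
    · have := (mul_eq_zero.1 (h3 i (Finset.mem_univ i))).resolve_left ((hg i).2 hp).ne'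
      rw [this, mul_zero]
    · exact mul_nonneg (not_lt.1 hp) (by linarith [hle i])
  rw [← h1] at h4
  linarith

theorem exists_good (hS : Conv S) (p : Fin n → ℝ) (hp : ∀ i, 0 < p i)
    (x : Fin n → ℝ) (hx : ∀ i, 0 ≤ x i) :
    ∃ y, Vert S y ∧ ∀ v, Chart S y v → Good v p x := by
  classical
  have hfin := vert_finite S
  obtain ⟨y0, hy0, _⟩ := exists_vert hS p hp
  let U := hfin.toFinset
  have hU : ∀ y, y ∈ U ↔ Vert S y := fun y => by simp [U]
  obtain ⟨y1, hy1, hm1⟩ := U.exists_max_image (fun y => y x) ⟨y0, (hU _).2 hy0⟩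
  obtain ⟨y, hyU, hm⟩ := (U.filter (fun y => y x = y1 x)).exists_max_image (fun y => y p)
    ⟨y1, Finset.mem_filter.2 ⟨hy1, rfl⟩⟩
  rw [Finset.mem_filter] at hyU
  obtain ⟨ε, hε, hsm⟩ := small_eps (U.filter (fun y => y x ≠ y1 x))
    (fun w => y x - w x) (fun w => w p - y p) (by
      intro w hw
      rw [Finset.mem_filter] at hw
      have := lt_of_le_of_ne (hm1 w hw.1) hw.2
      rw [hyU.2]
      simpa using this)
  have hV := (hU y).1 hyU.1
  have hmaxU : ∀ t, 0 < t → t ≤ ε → ∀ w ∈ U, w (x + t • p) ≤ y (x + t • p) := by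
    intro t ht hte w hw
    simp only [map_add, map_smul, smul_eq_mul]
    by_cases hwx : w x = y1 x
    · have := hm w (Finset.mem_filter.2 ⟨hw, hwx⟩)
      rw [hwx, hyU.2]
      nlinarith
    · have := hsm t ht.le hte w (Finset.mem_filter.2 ⟨hw, hwx⟩)
      linarith
  have hmaxF : ∀ t, 0 < t → t ≤ ε → ∀ w, Feas S w → w (x + t • p) ≤ y (x + t • p) := by
    intro t ht hte w hw
    obtain ⟨y2, hy2, h2⟩ := exists_vert hS (x + t • p) (fun i => by
      simp only [Pi.add_apply, Pi.smul_apply, smul_eq_mul]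
      have := hx i; have := mul_pos ht (hp i); linarith)
    exact (h2 w hw).trans (hmaxU t ht hte y2 ((hU _).2 hy2))
  refine ⟨y, hV, fun v hv i => ?_⟩
  have key : ∀ t, 0 < t → t ≤ ε → 0 ≤ v.coord i x + t * v.coord i p := by
    intro t ht hte
    obtain ⟨δ, hδ, hfe, _⟩ := tilt hV.1 (v.coord i) (fun a ha => hv.2 a ha i)
    have := hmaxF t ht hte _ hfe
    simp only [LinearMap.sub_apply, LinearMap.smul_apply, smul_eq_mul, map_add, map_smul] at this
    by_contra hcon
    push Not at hcon
    nlinarith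
  refine ⟨?_, ?_⟩
  · by_contra hcon
    push Not at hcon
    obtain ⟨η, hη, hs⟩ := small_eps ({()} : Finset Unit) (fun _ => - v.coord i x)
      (fun _ => v.coord i p) (by intro _ _; linarith)
    have h1 := hs (min ε η) (le_min hε.le hη.le) (min_le_right _ _) () (by simp)
    have h2 := key (min ε η) (lt_min hε hη) (min_le_left _ _)
    linarith
  · intro hneg
    have := key ε hε le_rfl
    nlinarith

end chart

open scoped Pointwise in
theorem nu_eq {f : MvPolynomial (Fin n) ℂ} {y : (Fin n → ℝ) →ₗ[ℝ] ℝ}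
    {v : Module.Basis (Fin n) ℝ (Fin n → ℝ)} (hF : Feas f.support y)
    (h : Chart f.support y v) {p x : Fin n → ℝ} (hg : Good v p x) :
    nu f x = y x := by
  have hmem : 0 < y x → x ∈ y x • newtonPolytope f := by
    intro h0
    refine ⟨(y x)⁻¹ • x, ?_, by simp [smul_smul, h0.ne']⟩
    have hconv : Convex ℝ (newtonPolytope f) := convex_convexHull _ _
    have : (y x)⁻¹ • x = ∑ i, ((y x)⁻¹ * v.coord i x) • v i := by
      conv_lhs => rw [← v.sum_repr x, Finset.smul_sum]
      simp [smul_smul]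
    rw [this]
    apply hconv.sum_mem
    · exact fun i _ => mul_nonneg (inv_nonneg.2 h0.le) (hg i).1
    · rw [← Finset.mul_sum, ← h.y_eq, inv_mul_cancel₀ h0.ne']
    · intro i _
      obtain ⟨a, ha, he⟩ := h.1 i
      rw [he]
      exact mem_poly ha.1
  apply le_antisymm
  · have hy0 : 0 ≤ y x := by
      rw [h.y_eq]; exact Finset.sum_nonneg fun i _ => (hg i).1
    refine gauge_le_of_mem hy0 ?_
    rcases hy0.eq_or_lt with h0 | h0
    · have h1 : ∀ i, v.coord i x = 0 := by
        intro i
        rw [h.y_eq] at h0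
        exact (Finset.sum_eq_zero_iff_of_nonneg (fun i _ => (hg i).1)).1 h0.symm i (Finset.mem_univ i)
      have hx : x = 0 := by
        rw [← v.sum_repr x]
        exact Finset.sum_eq_zero fun i _ => by
          have := h1 i
          rw [Module.Basis.coord_apply] at this
          rw [this, zero_smul]
      rw [hx]
      exact ⟨0, zero_mem_poly, by simp⟩
    · exact hmem h0
  · rcases le_or_gt (y x) 0 with h0 | h0
    · exact h0.trans (gauge_nonneg _)
    · rw [nu, gauge_def]
      apply le_csInf
      · exact ⟨y x, h0, hmem h0⟩
      · rintro r ⟨hr, q, hq, rfl⟩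
        have h1 := poly_le hF hq
        have hr : 0 < r := hr
        simp only [map_smul, smul_eq_mul]
        nlinarith

section lattice
variable {S : Finset (Fin n →₀ ℕ)} {y : (Fin n → ℝ) →ₗ[ℝ] ℝ}
  {v : Module.Basis (Fin n) ℝ (Fin n → ℝ)}

theorem exists_lattice (h : Chart S y v) : ∃ (d : ℕ) (E : Fin n → Fin n → ℤ), 1 ≤ d ∧
    ∀ i j, (d : ℝ) * v.coord i (Pi.single j 1) = E i j := by
  choose a ha hva using h.1
  let M : Matrix (Fin n) (Fin n) ℤ := fun i j => (a i j : ℤ)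
  let MR : Matrix (Fin n) (Fin n) ℝ := M.map (Int.castRingHom ℝ)
  let B : Matrix (Fin n) (Fin n) ℝ := fun j i => v.coord i (Pi.single j 1)
  have hMB : MR * B = 1 := by
    ext k i
    rw [Matrix.mul_apply]
    have h1 := lin_eq_sum (v.coord i) (v k)
    have h2 : ∑ j, MR k j * B j i = v.coord i (v k) := by
      rw [h1]
      refine Finset.sum_congr rfl fun j _ => ?_
      rw [hva k]
      have hM : MR k j = (a k j : ℝ) := by
        change (((a k j : ℕ) : ℤ) : ℝ) = _
        push_cast; rfl
      rw [hM]
      rfl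
    rw [h2, Module.Basis.coord_apply, Module.Basis.repr_self, Matrix.one_apply, Finsupp.single_apply]
  have hdet : MR.det = (M.det : ℝ) := by
    have := (Int.castRingHom ℝ).map_det M
    simpa [MR] using this.symm
  have hne : M.det ≠ 0 := by
    intro h0
    have := congrArg Matrix.det hMB
    rw [Matrix.det_mul, hdet, h0] at this
    simp at this
  have hadj : MR.adjugate = (M.det : ℝ) • B := by
    have : MR.adjugate * (MR * B) = MR.adjugate := by rw [hMB, Matrix.mul_one]
    rw [← Matrix.mul_assoc, Matrix.adjugate_mul, hdet] at this
    simpa using this.symm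
  have hadjZ : MR.adjugate = M.adjugate.map (Int.castRingHom ℝ) := by
    have := (Int.castRingHom ℝ).map_adjugate M
    simpa [MR] using this.symm
  refine ⟨M.det.natAbs, fun i j => M.det.sign * M.adjugate j i, Int.natAbs_pos.2 hne, ?_⟩
  intro i j
  have h1 : (M.det : ℝ) * B j i = (M.adjugate j i : ℝ) := by
    have := congrFun (congrFun (hadj.symm.trans hadjZ) j) i
    simpa using this
  have h2 : (M.det.natAbs : ℝ) = (M.det.sign : ℝ) * M.det := by
    have : (M.det.natAbs : ℤ) = M.det.sign * M.det := by
      rw [Int.sign_mul_self, Int.natCast_natAbs]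
    have h3 := congrArg (Int.cast : ℤ → ℝ) this
    rwa [Int.cast_mul, Int.cast_natCast] at h3
  rw [h2]
  rw [Int.cast_mul, ← h1]
  simp only [B]
  ring

/-- integral chart coordinates -/
def eZ (E : Fin n → Fin n → ℤ) (m : Fin n →₀ ℕ) (i : Fin n) : ℤ := ∑ j, (m j : ℤ) * E i j

/-- natural chart coordinates (truncated) -/
noncomputable def eN (E : Fin n → Fin n → ℤ) (m : Fin n →₀ ℕ) : Fin n →₀ ℕ :=
  Finsupp.equivFunOnFinite.symm (fun i => (eZ E m i).toNat)

/-- lattice points in the cone -/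
def InCone (v : Module.Basis (Fin n) ℝ (Fin n → ℝ)) (m : Fin n →₀ ℕ) : Prop :=
  ∀ i, 0 ≤ v.coord i (toR m)

variable {d : ℕ} {E : Fin n → Fin n → ℤ}

theorem eZ_cast (hE : ∀ i j, (d : ℝ) * v.coord i (Pi.single j 1) = E i j) (m : Fin n →₀ ℕ)
    (i : Fin n) : (eZ E m i : ℝ) = d * v.coord i (toR m) := by
  rw [lin_eq_sum (v.coord i), Finset.mul_sum, eZ]
  push_cast
  refine Finset.sum_congr rfl fun j _ => ?_
  rw [← hE]
  simp only [toR]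
  ring

theorem eN_castZ (hE : ∀ i j, (d : ℝ) * v.coord i (Pi.single j 1) = E i j) {m : Fin n →₀ ℕ}
    (hm : InCone v m) (i : Fin n) : (eN E m i : ℤ) = eZ E m i := by
  have h1 : (0 : ℝ) ≤ (eZ E m i : ℝ) := by
    rw [eZ_cast hE]
    exact mul_nonneg (Nat.cast_nonneg _) (hm i)
  have h2 : 0 ≤ eZ E m i := by exact_mod_cast h1
  simp [eN, h2]

theorem eN_cast (hE : ∀ i j, (d : ℝ) * v.coord i (Pi.single j 1) = E i j) {m : Fin n →₀ ℕ}
    (hm : InCone v m) (i : Fin n) : (eN E m i : ℝ) = d * v.coord i (toR m) := by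
  rw [← eZ_cast hE, ← eN_castZ hE hm]
  simp

theorem toR_add (a b : Fin n →₀ ℕ) : toR (a + b) = toR a + toR b := by
  ext i; simp [toR]

theorem toR_inj {a b : Fin n →₀ ℕ} (h : toR a = toR b) : a = b := by
  ext i
  have := congrFun h i
  simpa [toR] using this

theorem InCone.add {a b : Fin n →₀ ℕ} (ha : InCone v a) (hb : InCone v b) : InCone v (a + b) := by
  intro i
  rw [toR_add, map_add]
  exact add_nonneg (ha i) (hb i)

theorem eN_add (hE : ∀ i j, (d : ℝ) * v.coord i (Pi.single j 1) = E i j)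
    {a b : Fin n →₀ ℕ} (ha : InCone v a) (hb : InCone v b) : eN E (a + b) = eN E a + eN E b := by
  ext i
  have : ((eN E (a + b) i : ℕ) : ℝ) = ((eN E a + eN E b) i : ℕ) := by
    rw [eN_cast hE (ha.add hb), toR_add, Finsupp.add_apply]
    push_cast
    rw [eN_cast hE ha, eN_cast hE hb, map_add, mul_add]
  exact_mod_cast this

theorem eN_inj (hd : 1 ≤ d) (hE : ∀ i j, (d : ℝ) * v.coord i (Pi.single j 1) = E i j)
    {a b : Fin n →₀ ℕ} (ha : InCone v a) (hb : InCone v b) (h : eN E a = eN E b) : a = b := by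
  apply toR_inj
  apply v.repr.injective
  ext i
  have h1 := eN_cast hE ha i
  rw [h, eN_cast hE hb] at h1
  have hd' : (d : ℝ) ≠ 0 := by positivity
  exact (mul_left_cancel₀ hd' h1).symm

theorem eN_degree (h : Chart S y v)
    (hE : ∀ i j, (d : ℝ) * v.coord i (Pi.single j 1) = E i j)
    {a : Fin n →₀ ℕ} (ha : InCone v a) : ((∑ i, eN E a i : ℕ) : ℝ) = d * y (toR a) := by
  rw [h.y_eq, Finset.mul_sum]
  push_cast
  exact Finset.sum_congr rfl fun i _ => eN_cast hE ha i

theorem cone_sub (h : Chart S y v) (hd : 1 ≤ d)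
    (hE : ∀ i j, (d : ℝ) * v.coord i (Pi.single j 1) = E i j)
    {a q' k : Fin n →₀ ℕ} (ha : InCone v a) (hq' : InCone v q') (he : eN E q' = eN E a + k) :
    ∃ q, InCone v q ∧ eN E q = k ∧ q' = a + q := by
  have hdpos : (0 : ℝ) < d := by positivity
  have hco : ∀ i, v.coord i (toR q' - toR a) = (k i : ℝ) / d := by
    intro i
    rw [eq_div_iff hdpos.ne', map_sub]
    have h1 := eN_cast hE hq' i
    rw [he, Finsupp.add_apply] at h1
    push_cast at h1
    rw [eN_cast hE ha] at h1
    linarith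
  have hle : ∀ j, a j ≤ q' j := by
    intro j
    have h1 : toR q' - toR a = ∑ i, ((k i : ℝ) / d) • v i := by
      conv_lhs => rw [← v.sum_repr (toR q' - toR a)]
      refine Finset.sum_congr rfl fun i _ => ?_
      rw [← hco]; rfl
    have h2 := congrFun h1 j
    rw [Finset.sum_apply] at h2
    have h3 : 0 ≤ ∑ i, (((k i : ℝ) / d) • v i) j := by
      refine Finset.sum_nonneg fun i _ => ?_
      rw [Pi.smul_apply, smul_eq_mul]
      exact mul_nonneg (by positivity) (h.v_nonneg i j)
    rw [← h2, Pi.sub_apply] at h3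
    simp only [toR] at h3
    have : (a j : ℝ) ≤ q' j := by linarith
    exact_mod_cast this
  have hq : q' = a + (q' - a) := by
    ext j
    simp only [Finsupp.add_apply, Finsupp.tsub_apply]
    have := hle j
    omega
  have htq : toR (q' - a) = toR q' - toR a := by
    conv_rhs => rw [hq, toR_add]
    simp
  have hc : InCone v (q' - a) := by
    intro i
    rw [htq, hco]; positivity
  refine ⟨q' - a, hc, ?_, hq⟩
  ext i
  have h1 := eN_cast hE hc i
  rw [htq, hco] at h1
  have : (d : ℝ) * ((k i : ℝ) / d) = k i := by field_simp
  rw [this] at h1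
  exact_mod_cast h1

open Classical in
/-- the partial inverse of `eN` on monomials -/
noncomputable def phi (v : Module.Basis (Fin n) ℝ (Fin n → ℝ)) (E : Fin n → Fin n → ℤ)
    (k : Fin n →₀ ℕ) : MvPolynomial (Fin n) ℂ :=
  if h : ∃ q, InCone v q ∧ eN E q = k then monomial h.choose 1 else 0

theorem phi_eN (hd : 1 ≤ d) (hE : ∀ i j, (d : ℝ) * v.coord i (Pi.single j 1) = E i j)
    {q : Fin n →₀ ℕ} (hq : InCone v q) : phi v E (eN E q) = monomial q 1 := by
  have h : ∃ q', InCone v q' ∧ eN E q' = eN E q := ⟨q, hq, rfl⟩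
  rw [phi, dif_pos h, eN_inj hd hE h.choose_spec.1 hq h.choose_spec.2]

theorem phi_mul (h : Chart S y v) (hd : 1 ≤ d)
    (hE : ∀ i j, (d : ℝ) * v.coord i (Pi.single j 1) = E i j)
    {a : Fin n →₀ ℕ} (ha : InCone v a) (k : Fin n →₀ ℕ) :
    phi v E (eN E a + k) = monomial a 1 * phi v E k := by
  by_cases hk : ∃ q, InCone v q ∧ eN E q = k
  · obtain ⟨q, hq, rfl⟩ := hk
    rw [← eN_add hE ha hq, phi_eN hd hE (ha.add hq), phi_eN hd hE hq, monomial_mul, one_mul]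
  · have h2 : ¬ ∃ q, InCone v q ∧ eN E q = eN E a + k := by
      rintro ⟨q', hq', he⟩
      obtain ⟨q, hq, hqk, _⟩ := cone_sub h hd hE ha hq' he
      exact hk ⟨q, hq, hqk⟩
    rw [phi, dif_neg h2, phi, dif_neg hk, mul_zero]

/-- linear extension of `phi` -/
noncomputable def Psi (v : Module.Basis (Fin n) ℝ (Fin n → ℝ)) (E : Fin n → Fin n → ℤ) :
    MvPolynomial (Fin n) ℂ →ₗ[ℂ] MvPolynomial (Fin n) ℂ :=
  (MvPolynomial.basisMonomials (Fin n) ℂ).constr ℂ (phi v E)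

theorem Psi_monomial (k : Fin n →₀ ℕ) (c : ℂ) : Psi v E (monomial k c) = c • phi v E k := by
  have : (monomial k c : MvPolynomial (Fin n) ℂ) = c • MvPolynomial.basisMonomials (Fin n) ℂ k := by
    simp [smul_monomial]
  rw [this, map_smul, Psi, Module.Basis.constr_basis]

theorem Psi_mul (h : Chart S y v) (hd : 1 ≤ d)
    (hE : ∀ i j, (d : ℝ) * v.coord i (Pi.single j 1) = E i j)
    {a : Fin n →₀ ℕ} (ha : InCone v a) (c : ℂ) (H : MvPolynomial (Fin n) ℂ) :
    Psi v E (monomial (eN E a) c * H) = monomial a c * Psi v E H := by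
  induction H using MvPolynomial.induction_on' with
  | monomial k b =>
    rw [monomial_mul, Psi_monomial, Psi_monomial, phi_mul h hd hE ha, mul_smul_comm]
    have : (monomial a c : MvPolynomial (Fin n) ℂ) = c • monomial a 1 := by simp [smul_monomial]
    rw [this, smul_mul_assoc, smul_smul, mul_comm]
  | add p q hp hq => rw [mul_add, map_add, hp, hq, map_add, mul_add]

end lattice

theorem coeff_X_mul_pderiv (f : MvPolynomial (Fin n) ℂ) (j : Fin n) (m : Fin n →₀ ℕ) :
    coeff m (X j * pderiv j f) = (m j : ℂ) * coeff m f := by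
  classical
  induction f using MvPolynomial.induction_on' with
  | monomial k b =>
    rw [pderiv_monomial, X, monomial_mul, coeff_monomial, coeff_monomial, one_mul]
    by_cases hkj : k j = 0
    · by_cases hkm : k = m
      · subst hkm; simp [hkj]
      · simp [hkj, hkm]
    · have : Finsupp.single j 1 + (k - Finsupp.single j 1) = k := by
        rw [add_comm]
        apply tsub_add_cancel_of_le
        rw [Finsupp.single_le_iff]; omega
      rw [this]
      by_cases hkm : k = m
      · subst hkm; simp [mul_comm]
      · simp [hkm]
  | add p q hp hq => rw [map_add, mul_add, coeff_add, hp, hq, coeff_add, mul_add]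

theorem X_mul_pderiv_eq (f : MvPolynomial (Fin n) ℂ) (j : Fin n) :
    X j * pderiv j f = ∑ a ∈ f.support, monomial a ((a j : ℂ) * coeff a f) := by
  classical
  ext m
  rw [coeff_X_mul_pderiv, coeff_sum]
  simp only [coeff_monomial]
  rw [Finset.sum_ite_eq']
  split_ifs with h
  · rfl
  · rw [notMem_support_iff.1 h, mul_zero]

open Classical in
theorem eval_faceRestrict (Δ : Set (Fin n → ℝ)) (f : MvPolynomial (Fin n) ℂ) (j : Fin n)
    (t : Fin n → ℂ) : eval t (faceRestrict Δ (X j * pderiv j f)) =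
      ∑ a ∈ f.support, if toR a ∈ Δ then (a j : ℂ) * coeff a f * ∏ i, t i ^ a i else 0 := by
  rw [faceRestrict, map_sum]
  have hsub : (X j * pderiv j f).support ⊆ f.support := by
    intro m hm
    rw [mem_support_iff, coeff_X_mul_pderiv] at hm
    rw [mem_support_iff]
    exact right_ne_zero_of_mul hm
  rw [Finset.sum_subset hsub]
  · refine Finset.sum_congr rfl fun a _ => ?_
    split_ifs with h
    · rw [eval_monomial, coeff_X_mul_pderiv, Finsupp.prod_fintype]
      simp
    · simp
  · intro m _ hm
    rw [notMem_support_iff.1 hm]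
    simp

section main
variable {f : MvPolynomial (Fin n) ℂ} {y : (Fin n → ℝ) →ₗ[ℝ] ℝ}
  {v : Module.Basis (Fin n) ℝ (Fin n → ℝ)} {d : ℕ} {E : Fin n → Fin n → ℤ}

open Classical in
/-- The local forms in chart coordinates. -/
noncomputable def locForm (f : MvPolynomial (Fin n) ℂ) (y : (Fin n → ℝ) →ₗ[ℝ] ℝ)
    (v : Module.Basis (Fin n) ℝ (Fin n → ℝ)) (E : Fin n → Fin n → ℤ) (i : Fin n) :
    MvPolynomial (Fin n) ℂ :=
  ∑ a ∈ f.support with y (toR a) = 1, monomial (eN E a) ((v.coord i (toR a) : ℂ) * coeff a f)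

theorem locForm_homog (h : Chart f.support y v)
    (hE : ∀ i j, (d : ℝ) * v.coord i (Pi.single j 1) = E i j) (i : Fin n) :
    (locForm f y v E i).IsHomogeneous d := by
  classical
  apply IsHomogeneous.sum
  intro a ha
  rw [Finset.mem_filter] at ha
  apply isHomogeneous_monomial
  have h1 := eN_degree h hE (a := a) (fun i => h.2 a ha i)
  rw [ha.2, mul_one] at h1
  rw [Finsupp.degree_eq_sum]
  exact_mod_cast h1

theorem locForm_zero (hy : Feas f.support y) (h : Chart f.support y v) (hd : 1 ≤ d)
    (hE : ∀ i j, (d : ℝ) * v.coord i (Pi.single j 1) = E i j) (hnd : Nondegenerate f)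
    (w : Fin n → ℂ) (hw : ∀ i, eval w (locForm f y v E i) = 0) : w = 0 := by
  classical
  by_contra hne
  obtain ⟨i0, hi0⟩ : ∃ i, w i ≠ 0 := by
    by_contra hcon
    push Not at hcon
    exact hne (funext hcon)
  let z : (Fin n → ℝ) →ₗ[ℝ] ℝ := ∑ i with w i = 0, v.coord i
  have hz : ∀ x, z x = ∑ i with w i = 0, v.coord i x := by intro x; simp [z]
  obtain ⟨δ, hδ, hfe, hiff⟩ := tilt hy z (fun a ha => by
    rw [hz]; exact Finset.sum_nonneg fun i _ => h.2 a ha i)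
  obtain ⟨a0, ha0, hva0⟩ := h.1 i0
  have hz0 : z (toR a0) = 0 := by
    rw [hz, ← hva0]
    refine Finset.sum_eq_zero fun i hi => ?_
    rw [Finset.mem_filter] at hi
    have : i0 ≠ i := by rintro rfl; exact hi0 hi.2
    rw [Module.Basis.coord_apply, Module.Basis.repr_self]
    simp [this]
  have hface := isFace_of_feas hfe (a := a0) ⟨ha0.1, (hiff a0 ha0.1).2 ⟨ha0, hz0⟩⟩
  let u : Fin n → ℂ := fun i => if w i = 0 then 1 else w i
  have hu : ∀ i, u i ≠ 0 := by
    intro i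
    by_cases hi : w i = 0
    · simp [u, hi]
    · simp [u, hi]
  let t : Fin n → ℂ := fun j => ∏ i, u i ^ E i j
  have htm : ∀ m : Fin n →₀ ℕ, ∏ j, t j ^ m j = ∏ i, u i ^ eZ E m i := by
    intro m
    simp only [t]
    simp_rw [← Finset.prod_pow]
    rw [Finset.prod_comm]
    refine Finset.prod_congr rfl fun i _ => ?_
    have : ∀ s : Finset (Fin n), ∏ j ∈ s, (u i ^ E i j) ^ m j = u i ^ (∑ j ∈ s, (m j : ℤ) * E i j) := by
      intro s
      induction s using Finset.induction_on with
      | empty => simp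
      | insert b s hb ih =>
        rw [Finset.prod_insert hb, Finset.sum_insert hb, ih, zpow_add₀ (hu i), mul_comm (m b : ℤ),
          zpow_mul, zpow_natCast]
    exact this _
  refine hnd _ hface ⟨t, fun j => Finset.prod_ne_zero_iff.2 fun i _ => zpow_ne_zero _ (hu i), ?_⟩
  intro j
  rw [eval_faceRestrict]
  have hterm : ∀ a ∈ f.support,
      (if toR a ∈ {x | x ∈ newtonPolytope f ∧ (y - δ • z) x = 1} then
        (a j : ℂ) * coeff a f * ∏ i, t i ^ a i else 0) =
      if y (toR a) = 1 then (a j : ℂ) * coeff a f * ∏ i, w i ^ eN E a i else 0 := by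
    intro a ha
    have hmem : toR a ∈ {x | x ∈ newtonPolytope f ∧ (y - δ • z) x = 1} ↔
        (a ∈ Act f.support y ∧ z (toR a) = 0) := by
      rw [← hiff a ha]
      exact ⟨fun h => h.2, fun h => ⟨mem_poly ha, h⟩⟩
    by_cases hya : y (toR a) = 1
    · have hact : a ∈ Act f.support y := ⟨ha, hya⟩
      have hcone : InCone v a := fun i => h.2 a hact i
      rw [if_pos hya]
      by_cases hza : z (toR a) = 0
      · rw [if_pos (hmem.2 ⟨hact, hza⟩), htm]
        congr 1
        refine Finset.prod_congr rfl fun i _ => ?_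
        rw [← eN_castZ hE hcone, zpow_natCast]
        by_cases hi : w i = 0
        · rw [hz] at hza
          have h1 := (Finset.sum_eq_zero_iff_of_nonneg (fun i _ => hcone i)).1 hza i
            (Finset.mem_filter.2 ⟨Finset.mem_univ _, hi⟩)
          have h2 := eN_cast hE hcone i
          rw [h1, mul_zero] at h2
          have h3 : eN E a i = 0 := by exact_mod_cast h2
          rw [h3]; simp
        · simp [u, hi]
      · rw [if_neg (fun hh => hza (hmem.1 hh).2)]
        have : ∃ i, w i = 0 ∧ v.coord i (toR a) ≠ 0 := by
          by_contra hcon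
          push Not at hcon
          apply hza
          rw [hz]
          exact Finset.sum_eq_zero fun i hi => hcon i (Finset.mem_filter.1 hi).2
        obtain ⟨i, hi, hci⟩ := this
        have h2 := eN_cast hE hcone i
        have h3 : eN E a i ≠ 0 := by
          intro h0
          rw [h0] at h2
          have hd' : (d : ℝ) ≠ 0 := by positivity
          have := mul_eq_zero.1 (by simpa using h2.symm : (d : ℝ) * v.coord i (toR a) = 0)
          exact hci (this.resolve_left hd')
        rw [Finset.prod_eq_zero (Finset.mem_univ i) (by rw [hi, zero_pow h3]), mul_zero]
    · rw [if_neg hya, if_neg (fun hh => hya (hmem.1 hh).1.2)]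
  trans ∑ a ∈ f.support,
      if y (toR a) = 1 then (a j : ℂ) * coeff a f * ∏ i, w i ^ eN E a i else 0
  · refine Finset.sum_congr rfl fun a ha => ?_
    convert hterm a ha
  rw [← Finset.sum_filter]
  have hexp : ∀ a : Fin n →₀ ℕ, (a j : ℂ) = ∑ i, ((v i j : ℝ) : ℂ) * ((v.coord i (toR a) : ℝ) : ℂ) := by
    intro a
    have h1 := congrFun (v.sum_repr (toR a)) j
    rw [Finset.sum_apply] at h1
    have h2 : (a j : ℝ) = ∑ i, v i j * v.coord i (toR a) := by
      change toR a j = _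
      rw [← h1]
      refine Finset.sum_congr rfl fun i _ => ?_
      rw [Pi.smul_apply, smul_eq_mul, mul_comm, Module.Basis.coord_apply]
    have h3 := congrArg (Complex.ofReal) h2
    push_cast at h3
    exact h3
  have hfin : ∑ a ∈ f.support with y (toR a) = 1, (a j : ℂ) * coeff a f * ∏ i, w i ^ eN E a i =
      ∑ i, ((v i j : ℝ) : ℂ) * eval w (locForm f y v E i) := by
    simp only [locForm, map_sum, eval_monomial, Finset.mul_sum]
    rw [Finset.sum_comm]
    refine Finset.sum_congr rfl fun a _ => ?_
    rw [hexp a, Finset.sum_mul, Finset.sum_mul]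
    refine Finset.sum_congr rfl fun i _ => ?_
    rw [Finsupp.prod_fintype _ _ (by simp)]
    ring
  rw [hfin]
  exact Finset.sum_eq_zero fun i _ => by rw [hw, mul_zero]

theorem step (hn : 1 ≤ n) (hy : Feas f.support y) (h : Chart f.support y v) (hd : 1 ≤ d)
    (hE : ∀ i j, (d : ℝ) * v.coord i (Pi.single j 1) = E i j) (hnd : Nondegenerate f)
    {p : Fin n → ℝ} (hp : ∀ i, 0 < p i)
    (N : Submodule ℂ (MvPolynomial (Fin n) ℂ)) (hL : (LIdeal f).restrictScalars ℂ ≤ N)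
    {α : ℝ} (hα : (n : ℝ) ≤ α)
    (hIH : ∀ a ∈ f.support, y (toR a) < 1 → ∀ q : Fin n →₀ ℕ, Good v p (toR q) →
      y (toR q) = α - 1 → monomial (a + q) 1 ∈ N)
    (m : Fin n →₀ ℕ) (hm : Good v p (toR m)) (hym : y (toR m) = α) :
    monomial m 1 ∈ N := by
  classical
  have hdpos : (0 : ℝ) < d := by positivity
  have hmc : InCone v m := fun i => (hm i).1
  let R : Finset (Fin n) := Finset.univ.filter (fun i => v.coord i p < 0)
  let ρ : Fin n →₀ ℕ := Finsupp.equivFunOnFinite.symm (fun i => if i ∈ R then 1 else 0)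
  have hρ : ∀ i, ρ i = if i ∈ R then 1 else 0 := fun i => rfl
  have hρs : ∑ i, ρ i = R.card := by simp [hρ]
  have hRlt : R.card < n := by
    have : R.card < (Finset.univ : Finset (Fin n)).card := by
      apply Finset.card_lt_card
      rw [Finset.ssubset_univ_iff]
      intro hR
      have hall : ∀ i, v.coord i p < 0 := by
        intro i
        have : i ∈ R := hR ▸ Finset.mem_univ i
        exact (Finset.mem_filter.1 this).2
      have h1 := congrFun (v.sum_repr p) ⟨0, hn⟩
      rw [Finset.sum_apply] at h1
      have h2 : ∑ i, (v.repr p i • v i) ⟨0, hn⟩ ≤ 0 := by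
        refine Finset.sum_nonpos fun i _ => ?_
        rw [Pi.smul_apply, smul_eq_mul]
        exact mul_nonpos_of_nonpos_of_nonneg (hall i).le (h.v_nonneg i _)
      linarith [hp ⟨0, hn⟩]
    simpa using this
  have hρle : ρ ≤ eN E m := by
    intro i
    rw [hρ]
    split_ifs with hi
    · have h1 := (hm i).2 (Finset.mem_filter.1 hi).2
      have h2 := eN_cast hE hmc i
      have h3 : (0 : ℝ) < eN E m i := by rw [h2]; positivity
      have : 0 < eN E m i := by exact_mod_cast h3
      omega
    · exact Nat.zero_le _
  have hsplit : ρ + (eN E m - ρ) = eN E m := add_tsub_cancel_of_le hρle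
  have hdegm := eN_degree h hE hmc
  rw [hym] at hdegm
  have hsum : R.card + ∑ i, (eN E m - ρ) i = ∑ i, eN E m i := by
    rw [← hρs, ← Finset.sum_add_distrib]
    refine Finset.sum_congr rfl fun i _ => ?_
    rw [← Finsupp.add_apply, hsplit]
  have hDn : d * n ≤ ∑ i, eN E m i := by
    have : ((d * n : ℕ) : ℝ) ≤ ((∑ i, eN E m i : ℕ) : ℝ) := by
      rw [hdegm]; push_cast
      exact mul_le_mul_of_nonneg_left hα hdpos.le
    exact_mod_cast this
  obtain ⟨d', rfl⟩ : ∃ d', d = d' + 1 := ⟨d - 1, by omega⟩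
  obtain ⟨n', hn'⟩ : ∃ n', n = n' + 1 := ⟨n - 1, by omega⟩
  have hbig : n * (d' + 1 - 1) + 1 ≤ ∑ i, (eN E m - ρ) i := by
    have : (d' + 1) * n = n * d' + n := by ring
    simp only [Nat.add_sub_cancel]
    omega
  have hged : d' + 1 ≤ ∑ i, (eN E m - ρ) i := by
    refine le_trans ?_ hbig
    simp only [Nat.add_sub_cancel]
    rw [hn']
    nlinarith [Nat.zero_le (n' * d')]
  obtain ⟨e, he⟩ : ∃ e, ∑ i, (eN E m - ρ) i = e + (d' + 1) := ⟨_, (Nat.sub_add_cancel hged).symm⟩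
  rw [he] at hbig
  obtain ⟨hh, hhom, hmac⟩ := macaulay hd (locForm f y v E) (locForm_homog h hE)
    (locForm_zero hy h hd hE hnd) e (monomial (eN E m - ρ) 1) hbig
    (isHomogeneous_monomial _ (by rw [Finsupp.degree_eq_sum, he]))
  have hm1 : (monomial (eN E m) 1 : MvPolynomial (Fin n) ℂ) =
      ∑ i, locForm f y v E i * (monomial ρ 1 * hh i) := by
    rw [← hsplit, ← one_mul (1 : ℂ), ← monomial_mul, one_mul, hmac, Finset.mul_sum]
    exact Finset.sum_congr rfl fun i _ => by ring
  let G : Fin n → MvPolynomial (Fin n) ℂ := fun i => Psi v E (monomial ρ 1 * hh i)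
  have hm2 : (monomial m 1 : MvPolynomial (Fin n) ℂ) = ∑ i, ∑ a ∈ f.support with y (toR a) = 1,
      monomial a ((v.coord i (toR a) : ℂ) * coeff a f) * G i := by
    rw [← phi_eN hd hE hmc, ← one_smul ℂ (phi v E _), ← Psi_monomial, hm1, map_sum]
    refine Finset.sum_congr rfl fun i _ => ?_
    rw [locForm, Finset.sum_mul, map_sum]
    refine Finset.sum_congr rfl fun a ha => ?_
    exact Psi_mul h hd hE (fun i => h.2 a (Finset.mem_filter.1 ha) i) _ _
  -- the full derivatives
  let F : Fin n → MvPolynomial (Fin n) ℂ := fun i =>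
    ∑ a ∈ f.support, monomial a ((v.coord i (toR a) : ℂ) * coeff a f)
  have hF : ∀ i, F i ∈ LIdeal f := by
    intro i
    have : F i = ∑ j, C ((v.coord i (Pi.single j 1) : ℝ) : ℂ) * (X j * pderiv j f) := by
      simp only [X_mul_pderiv_eq, Finset.mul_sum, C_mul_monomial]
      rw [Finset.sum_comm]
      refine Finset.sum_congr rfl fun a _ => ?_
      rw [← map_sum, lin_eq_sum (v.coord i)]
      congr 1
      push_cast
      rw [Finset.sum_mul]
      refine Finset.sum_congr rfl fun j _ => ?_
      simp only [toR]
      push_cast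
      ring
    rw [this]
    exact Ideal.sum_mem _ fun j _ => Ideal.mul_mem_left _ _ (Ideal.subset_span ⟨j, rfl⟩)
  have hm3 : (monomial m 1 : MvPolynomial (Fin n) ℂ) = ∑ i, (F i * G i -
      ∑ a ∈ f.support with ¬ y (toR a) = 1, monomial a ((v.coord i (toR a) : ℂ) * coeff a f) * G i) := by
    rw [hm2]
    refine Finset.sum_congr rfl fun i _ => ?_
    rw [eq_sub_iff_add_eq, Finset.sum_filter_add_sum_filter_not, Finset.sum_mul]
  rw [hm3]
  refine N.sum_mem fun i _ => N.sub_mem (hL ?_) (N.sum_mem fun a ha => ?_)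
  · exact Ideal.mul_mem_right _ _ (hF i)
  rw [Finset.mem_filter] at ha
  have hlt : y (toR a) < 1 := lt_of_le_of_ne (hy a ha.1) ha.2
  have hG : G i = ∑ k ∈ (hh i).support, coeff k (hh i) • phi v E (ρ + k) := by
    simp only [G]
    conv_lhs => rw [(hh i).as_sum, Finset.mul_sum, map_sum]
    refine Finset.sum_congr rfl fun k _ => ?_
    rw [monomial_mul, one_mul, Psi_monomial]
  rw [hG, Finset.mul_sum]
  refine N.sum_mem fun k hk => ?_
  have hsm : (monomial a ((v.coord i (toR a) : ℂ) * coeff a f) : MvPolynomial (Fin n) ℂ) =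
    ((v.coord i (toR a) : ℂ) * coeff a f) • monomial a 1 := by simp [smul_monomial]
  rw [hsm, smul_mul_assoc, mul_smul_comm]
  refine N.smul_mem _ (N.smul_mem _ ?_)
  by_cases hq : ∃ q, InCone v q ∧ eN E q = ρ + k
  · obtain ⟨q, hqc, hqe⟩ := hq
    rw [← hqe, phi_eN hd hE hqc, monomial_mul, one_mul]
    refine hIH a ha.1 hlt q ?_ ?_
    · intro l
      refine ⟨hqc l, fun hl => ?_⟩
      have hlR : l ∈ R := Finset.mem_filter.2 ⟨Finset.mem_univ _, hl⟩
      have h1 := eN_cast hE hqc l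
      rw [hqe, Finsupp.add_apply, hρ, if_pos hlR] at h1
      push_cast at h1
      have h2 : (0 : ℝ) < (d' + 1 : ℕ) * v.coord l (toR q) := by
        push_cast; rw [← h1]; positivity
      exact (mul_pos_iff_of_pos_left hdpos).1 h2
    · have h1 := eN_degree h hE hqc
      have h2 : ∑ l, eN E q l = R.card + e := by
        rw [hqe, ← hρs]
        have h3 := (hhom i) (mem_support_iff.1 hk)
        have h4 : ∑ l, k l = e := by
          rw [← h3]
          simp [Finsupp.weight_apply, Finsupp.sum_fintype]
        rw [← h4, ← Finset.sum_add_distrib]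
        rfl
      have h5 : ∑ l, eN E m l = ∑ l, eN E q l + (d' + 1) := by omega
      rw [h5, Nat.cast_add, h1] at hdegm
      have : ((d' + 1 : ℕ) : ℝ) * (y (toR q) + 1) = (d' + 1 : ℕ) * α := by linarith
      have := mul_left_cancel₀ hdpos.ne' this
      linarith
  · rw [phi, dif_neg hq, mul_zero]
    exact N.zero_mem

end main

theorem monomial_claim (hn : 1 ≤ n) {f : MvPolynomial (Fin n) ℂ}
    (hconv : Convenient f) (hnd : Nondegenerate f)
    (hsimp : ∀ Δ : Set (Fin n → ℝ), IsFace (newtonPolytope f) Δ →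
      Δ ≠ newtonPolytope f → IsSimplex Δ) {α : ℝ} (hα : (n : ℝ) ≤ α)
    (m : Fin n →₀ ℕ) (hm : nu f (toR m) = α) :
    monomial m 1 ∈ Nlt f α ⊔ (LIdeal f).restrictScalars ℂ := by
  classical
  have hS : Conv f.support := by
    intro i
    obtain ⟨k, hk, hc⟩ := hconv i
    exact ⟨k, hk, mem_support_iff.2 hc⟩
  have hfin := vert_finite f.support
  obtain ⟨p, hp, hgen⟩ := exists_generic _ hfin
  let U := hfin.toFinset
  have hU : ∀ y, y ∈ U ↔ Vert f.support y := fun y => by simp [U]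
  have key : ∀ (c : ℕ) (y : (Fin n → ℝ) →ₗ[ℝ] ℝ), Vert f.support y →
      (U.filter (fun y' => y' p < y p)).card = c → ∀ v, Chart f.support y v → ∀ m : Fin n →₀ ℕ,
      Good v p (toR m) → y (toR m) = α →
      monomial m 1 ∈ Nlt f α ⊔ (LIdeal f).restrictScalars ℂ := by
    intro c
    induction c using Nat.strong_induction_on with
    | _ c ih =>
      intro y hy hc v hv m hm hym
      obtain ⟨d, E, hd, hE⟩ := exists_lattice hv
      refine step hn hy.1 hv hd hE hnd hp _ le_sup_right hα ?_ m hm hym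
      intro a ha hya q hq hyq
      obtain ⟨y', hy', hg'⟩ := exists_good hS p hp (toR (a + q)) (fun i => Nat.cast_nonneg _)
      obtain ⟨v', hv'⟩ := exists_chart hn hsimp hy'
      have hG' := hg' v' hv'
      have hnu := nu_eq hy'.1 hv' hG'
      have h1 : y' (toR q) ≤ α - 1 := hyq ▸ hq.le hv hy'.1
      have h2 : y' (toR a) ≤ 1 := hy'.1 a ha
      have h3 : y' (toR (a + q)) = y' (toR a) + y' (toR q) := by rw [toR_add, map_add]
      by_cases hlt : y' (toR (a + q)) < α
      · apply Submodule.mem_sup_left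
        intro k hk
        have : k = a + q := by
          by_contra hne
          rw [mem_support_iff, coeff_monomial, if_neg (Ne.symm hne)] at hk
          exact hk rfl
        rw [this, hnu]
        exact hlt
      · have heq : y' (toR (a + q)) = α := by linarith
        have hq2 : y' (toR q) = y (toR q) := by linarith
        have ha2 : y' (toR a) = 1 := by linarith
        have hle := hq.le_p hv hy'.1 hq2
        have hne : y' p ≠ y p := by
          intro h
          have := hgen y' hy' y hy h
          rw [this] at ha2
          linarith
        have hltp := lt_of_le_of_ne hle hne
        refine ih _ ?_ y' hy' rfl v' hv' _ hG' heq
        rw [← hc]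
        apply Finset.card_lt_card
        rw [Finset.ssubset_iff_of_subset]
        · refine ⟨y', Finset.mem_filter.2 ⟨(hU _).2 hy', hltp⟩, ?_⟩
          intro h
          exact lt_irrefl _ (Finset.mem_filter.1 h).2
        · intro w hw
          rw [Finset.mem_filter] at hw ⊢
          exact ⟨hw.1, hw.2.trans hltp⟩
  obtain ⟨y, hy, hg⟩ := exists_good hS p hp (toR m) (fun i => by simp [toR])
  obtain ⟨v, hv⟩ := exists_chart hn hsimp hy
  have hG := hg v hv
  exact key _ y hy rfl v hv m hG ((nu_eq hy.1 hv hG).symm.trans hm)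

theorem grN_eq_bot (hn : 1 ≤ n) {f : MvPolynomial (Fin n) ℂ}
    (hconv : Convenient f) (hnd : Nondegenerate f)
    (hsimp : ∀ Δ : Set (Fin n → ℝ), IsFace (newtonPolytope f) Δ →
      Δ ≠ newtonPolytope f → IsSimplex Δ) {α : ℝ} (hα : (n : ℝ) ≤ α) : grN f α = ⊥ := by
  classical
  rw [grN, ← le_bot_iff, Submodule.map_le_iff_le_comap, Submodule.comap_bot, Submodule.ker_mkQ]
  refine sup_le ?_ le_sup_right
  intro g hg
  rw [g.as_sum]
  refine Submodule.sum_mem _ fun m hm => ?_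
  have hs : (monomial m (coeff m g) : MvPolynomial (Fin n) ℂ) = coeff m g • monomial m 1 := by
    simp [smul_monomial]
  rw [hs]
  apply Submodule.smul_mem
  rcases (hg m hm).lt_or_eq with h | h
  · apply Submodule.mem_sup_left
    intro k hk
    have : k = m := by
      by_contra hne
      rw [mem_support_iff, coeff_monomial, if_neg (Ne.symm hne)] at hk
      exact hk rfl
    rw [this]
    exact h
  · exact monomial_claim hn hconv hnd hsimp hα m h

end geometry

end ToricNewton

open ToricNewton in
/-- if the Newton polytope is simplicial (every proper face is a
simplex), then the toric Newton spectrum is contained in `[0, n)`. -/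
theorem toric_newton_spectrum_in_Ico {n : ℕ} (hn : 1 ≤ n) (f : MvPolynomial (Fin n) ℂ)
    (hconv : Convenient f) (hnd : Nondegenerate f)
    (hsimp : ∀ Δ : Set (Fin n → ℝ), IsFace (newtonPolytope f) Δ →
      Δ ≠ newtonPolytope f → IsSimplex Δ) :
    ∀ α : ℚ, (n : ℚ) ≤ α → grN f (α : ℝ) = ⊥ := by
  intro α hα
  exact grN_eq_bot hn hconv hnd hsimp (by exact_mod_cast hα)
end

section
/- Let f ∈ ℬ be convenient and Newton nondegenerate. Then for every α ∈ ℚ with α < 1 one has dim_ℂ gr^𝒩_α(ℬ/ℒ) = card{v ∈ ℕⁿ : ν(v) = α}. -/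
open MvPolynomial

namespace ToricProof

theorem exists_embed {S M : Type*} [CommRing S] [IsDomain S] [AddCommGroup M] [Module S M]
    [Module.Finite S M] (htf : ∀ (s : S) (x : M), s ≠ 0 → s • x = 0 → x = 0) :
    ∃ (N : ℕ) (lam : M →ₗ[S] (Fin N → S)), Function.Injective lam := by
  classical
  let K := FractionRing S
  let W := LocalizedModule (nonZeroDivisors S) M
  let b := Module.finBasis K W
  let co : W →ₗ[S] (Fin (Module.finrank K W) → K) := b.equivFun.toLinearMap.restrictScalars S
  let j : M →ₗ[S] (Fin (Module.finrank K W) → K) :=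
    co ∘ₗ LocalizedModule.mkLinearMap (nonZeroDivisors S) M
  obtain ⟨G, hG⟩ := (inferInstance : Module.Finite S M)
  obtain ⟨s, hs⟩ := IsLocalization.exist_integer_multiples_of_finset (nonZeroDivisors S)
    ((G ×ˢ (Finset.univ : Finset (Fin (Module.finrank K W)))).image (fun p => j p.1 p.2) : Finset K)
  have hin : Function.Injective (Algebra.linearMap S K) := IsFractionRing.injective S K
  let R := LinearMap.range (Algebra.linearMap S K)
  have hmem : ∀ (x : M) i, (s : S) • j x i ∈ R := by
    intro x i
    have hx : x ∈ Submodule.span S (G : Set M) := by rw [hG]; trivial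
    induction hx using Submodule.span_induction with
    | mem x hx =>
      obtain ⟨y, hy⟩ := hs (j x i) (Finset.mem_image.2 ⟨(x, i), by simpa using hx, rfl⟩)
      exact ⟨y, hy⟩
    | zero => simp
    | add x y _ _ hx hy => rw [map_add, Pi.add_apply, smul_add]; exact R.add_mem hx hy
    | smul a x _ hx =>
      rw [map_smul, Pi.smul_apply, smul_comm]; exact R.smul_mem _ hx
  let e := LinearEquiv.ofInjective (Algebra.linearMap S K) hin
  let lam : M →ₗ[S] (Fin (Module.finrank K W) → S) := LinearMap.pi fun i =>
    e.symm.toLinearMap ∘ₗ LinearMap.codRestrict R ((s : S) • (LinearMap.proj i ∘ₗ j))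
      (fun x => hmem x i)
  refine ⟨_, lam, ?_⟩
  rw [← LinearMap.ker_eq_bot, LinearMap.ker_eq_bot']
  intro x hx
  have hs0 : (s : S) ≠ 0 := nonZeroDivisors.coe_ne_zero s
  have h1 : j x = 0 := by
    funext i
    have h2 : e.symm (LinearMap.codRestrict R ((s : S) • (LinearMap.proj i ∘ₗ j))
      (fun x => hmem x i) x) = 0 := congrFun hx i
    rw [LinearEquiv.map_eq_zero_iff] at h2
    have h3 : (s : S) • j x i = 0 := congrArg Subtype.val h2
    rw [Algebra.smul_def] at h3
    rcases mul_eq_zero.1 h3 with h4 | h4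
    · exact absurd ((map_eq_zero_iff _ hin).1 h4) hs0
    · exact h4
  have h5 : LocalizedModule.mkLinearMap (nonZeroDivisors S) M x = 0 :=
    (LinearEquiv.map_eq_zero_iff b.equivFun).1 h1
  obtain ⟨t, ht⟩ := (IsLocalizedModule.eq_zero_iff (nonZeroDivisors S)
    (LocalizedModule.mkLinearMap (nonZeroDivisors S) M)).1 h5
  exact htf t x (nonZeroDivisors.coe_ne_zero t) ht

theorem core {n : ℕ} {B : Type} [CommRing B] [IsDomain B] [Algebra ℂ B] (F : Fin n → B)
    (hft : Algebra.FiniteType ℂ B) (htr : (n : Cardinal) ≤ Algebra.trdeg ℂ B)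
    (hintegral : ∀ b : B, ((aeval F : MvPolynomial (Fin n) ℂ →ₐ[ℂ] B) : MvPolynomial (Fin n) ℂ →+* B).IsIntegralElem b)
    (g : B) (a d r : ℕ) (had : a < d) (c : ℕ → MvPolynomial (Fin n) ℂ)
    (hc : ∀ i < r, (c i).totalDegree ≤ a * (r - i))
    (hg : g ^ r = ∑ i ∈ Finset.range r, aeval F (c i) * g ^ i)
    (hgL : g ∈ (Ideal.span (Set.range F)) ^ d) : g = 0 := by
  classical
  have halg : Algebra.IsAlgebraic (Algebra.adjoin ℂ (Set.range F)) B := by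
    constructor
    intro b
    apply IsIntegral.isAlgebraic
    obtain ⟨p, hp, hpb⟩ := hintegral b
    have hr : ∀ s : MvPolynomial (Fin n) ℂ, aeval F s ∈ Algebra.adjoin ℂ (Set.range F) := by
      intro s
      rw [Algebra.adjoin_range_eq_range_aeval]; exact ⟨s, rfl⟩
    let φ : MvPolynomial (Fin n) ℂ →+* Algebra.adjoin ℂ (Set.range F) :=
      ((aeval F : MvPolynomial (Fin n) ℂ →ₐ[ℂ] B).codRestrict _ hr : _ →ₐ[ℂ] _)
    refine ⟨p.map φ, hp.map φ, ?_⟩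
    rw [Polynomial.eval₂_map]
    exact hpb
  have hind : AlgebraicIndependent ℂ F :=
    (Algebra.IsAlgebraic.isTranscendenceBasis_of_lift_le_trdeg_of_finite ℂ F (by simpa using htr)).1
  letI : Algebra (MvPolynomial (Fin n) ℂ) B := (aeval F : MvPolynomial (Fin n) ℂ →ₐ[ℂ] B).toRingHom.toAlgebra
  have hmap : ∀ s : MvPolynomial (Fin n) ℂ, algebraMap (MvPolynomial (Fin n) ℂ) B s = aeval F s := fun _ => rfl
  haveI : IsScalarTower ℂ (MvPolynomial (Fin n) ℂ) B := by
    apply IsScalarTower.of_algebraMap_eq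
    intro x
    rw [hmap, MvPolynomial.algebraMap_eq, aeval_C]
  haveI : Algebra.FiniteType (MvPolynomial (Fin n) ℂ) B := Algebra.FiniteType.of_restrictScalars_finiteType ℂ _ _
  haveI : Algebra.IsIntegral (MvPolynomial (Fin n) ℂ) B := ⟨hintegral⟩
  haveI : Module.Finite (MvPolynomial (Fin n) ℂ) B := Algebra.IsIntegral.finite
  obtain ⟨N, lam, hlam⟩ := exists_embed (S := MvPolynomial (Fin n) ℂ) (M := B) (by
    intro s x hs hx
    rw [Algebra.smul_def, hmap] at hx
    rcases mul_eq_zero.1 hx with h | h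
    · exact absurd ((injective_iff_map_eq_zero _).1 hind s h) hs
    · exact h)
  let D : ℕ := ∑ i ∈ Finset.range r, ∑ j, (lam (g ^ i) j).totalDegree
  have hdeg : ∀ k j, (lam (g ^ k) j).totalDegree ≤ a * k + D := by
    intro k
    induction k using Nat.strong_induction_on with
    | _ k ih =>
      intro j
      by_cases hk : k < r
      · have h1 : (lam (g ^ k) j).totalDegree ≤ ∑ j, (lam (g ^ k) j).totalDegree :=
          Finset.single_le_sum (f := fun j => (lam (g ^ k) j).totalDegree) (fun _ _ => Nat.zero_le _) (Finset.mem_univ j)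
        have h2 : ∑ j, (lam (g ^ k) j).totalDegree ≤ D :=
          Finset.single_le_sum (f := fun i => ∑ j, (lam (g ^ i) j).totalDegree) (fun _ _ => Nat.zero_le _) (Finset.mem_range.2 hk)
        omega
      · push Not at hk
        have h1 : g ^ k = ∑ i ∈ Finset.range r, c i • g ^ (k - r + i) := by
          rw [← Nat.sub_add_cancel hk, pow_add, hg, Finset.mul_sum]
          apply Finset.sum_congr rfl
          intro i _
          rw [Algebra.smul_def, hmap, pow_add, Nat.sub_add_cancel hk]; ring
        rw [h1, map_sum, Finset.sum_apply]
        apply MvPolynomial.totalDegree_finsetSum_le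
        intro i hi
        have hi' := Finset.mem_range.1 hi
        rw [map_smul, Pi.smul_apply, smul_eq_mul]
        refine (MvPolynomial.totalDegree_mul _ _).trans ?_
        have h2 := ih (k - r + i) (by omega) j
        have h3 := hc i hi'
        have h4 : a * k = a * (r - i) + a * (k - r + i) := by
          rw [← mul_add]; congr 1; omega
        omega
  have hI : Ideal.span (Set.range F) = (idealOfVars (Fin n) ℂ).map (algebraMap (MvPolynomial (Fin n) ℂ) B) := by
    rw [idealOfVars, Ideal.map_span, ← Set.range_comp]
    congr 2
    funext i
    simp [hmap]
  have hord : ∀ k, ∀ x ∈ (Ideal.span (Set.range F)) ^ k, ∀ j, lam x j ∈ idealOfVars (Fin n) ℂ ^ k := by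
    intro k x hx j
    rw [hI, ← Ideal.map_pow, Ideal.map] at hx
    induction hx using Submodule.span_induction with
    | mem x hx =>
      obtain ⟨s, hs, rfl⟩ := hx
      rw [Algebra.algebraMap_eq_smul_one, map_smul, Pi.smul_apply, smul_eq_mul]
      exact Ideal.mul_mem_right _ _ hs
    | zero => simp
    | add x y _ _ hx hy => rw [map_add]; exact Ideal.add_mem _ hx hy
    | smul b x hx0 _ =>
      clear * - hx0
      revert b
      induction hx0 using Submodule.span_induction with
      | mem x hx =>
        intro b
        obtain ⟨s, hs, rfl⟩ := hx
        rw [smul_eq_mul, mul_comm, ← Algebra.smul_def, map_smul, Pi.smul_apply, smul_eq_mul]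
        exact Ideal.mul_mem_right _ _ hs
      | zero => simp
      | add x y _ _ hx hy => intro b; rw [smul_add, map_add]; exact Ideal.add_mem _ (hx b) (hy b)
      | smul b x _ hx => intro b'; rw [smul_smul]; exact hx _
  have hfin : lam (g ^ (D + 1)) = 0 := by
    funext j
    have h1 := hdeg (D + 1) j
    have h2 := hord (d * (D + 1)) (g ^ (D + 1)) (by rw [pow_mul]; exact Ideal.pow_mem_pow hgL _) j
    rw [mem_pow_idealOfVars_iff] at h2
    by_contra hne
    obtain ⟨m, hm⟩ := MvPolynomial.support_nonempty.2 hne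
    have h3 := h2 m hm
    have h4 := MvPolynomial.le_totalDegree hm
    have h5 : m.degree = m.sum fun _ e => e := rfl
    have h6 : (a + 1) * (D + 1) ≤ d * (D + 1) := Nat.mul_le_mul_right _ had
    rw [add_mul] at h6
    omega
  have := hlam (hfin.trans (map_zero lam).symm)
  exact pow_eq_zero_iff (by omega) |>.1 this

end ToricProof

namespace ToricProof

/-- generators of the Rees-type algebra `ℂ[t, tF₁, …, tFₙ]`. -/
def reesGens {n : ℕ} {B : Type} [CommRing B] [Algebra ℂ B] (F : Fin n → B) : Set (Polynomial B) :=
  (Set.range fun c : ℂ => Polynomial.C (algebraMap ℂ B c)) ∪ {Polynomial.X} ∪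
    Set.range fun i => Polynomial.X * Polynomial.C (F i)

theorem rees_coeff {n : ℕ} {B : Type} [CommRing B] [Algebra ℂ B] (F : Fin n → B)
    (x : Polynomial B) (hx : x ∈ Subring.closure (reesGens F)) :
    ∀ j, ∃ P : MvPolynomial (Fin n) ℂ, P.totalDegree ≤ j ∧ aeval F P = x.coeff j := by
  classical
  induction hx using Subring.closure_induction with
  | mem x hx =>
    intro j
    rcases hx with (⟨c, rfl⟩ | hx) | ⟨i, rfl⟩
    · by_cases hj : j = 0
      · exact ⟨MvPolynomial.C c, by simp, by simp [hj]⟩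
      · exact ⟨0, by simp, by simp [Polynomial.coeff_C, hj]⟩
    · rw [Set.mem_singleton_iff] at hx
      subst hx
      by_cases hj : j = 1
      · exact ⟨1, by simp, by simp [hj]⟩
      · exact ⟨0, by simp, by simp [Polynomial.coeff_X, Ne.symm hj]⟩
    · by_cases hj : j = 1
      · exact ⟨X i, by simp [hj], by simp [hj]⟩
      · exact ⟨0, by simp, by simp [Polynomial.coeff_X, Ne.symm hj]⟩
  | zero => intro j; exact ⟨0, by simp, by simp⟩
  | one =>
    intro j
    by_cases hj : j = 0
    · exact ⟨1, by simp, by simp [hj]⟩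
    · exact ⟨0, by simp, by simp [Polynomial.coeff_one, hj]⟩
  | add x y _ _ hx hy =>
    intro j
    obtain ⟨P, hP, hP'⟩ := hx j
    obtain ⟨Q, hQ, hQ'⟩ := hy j
    exact ⟨P + Q, (totalDegree_add _ _).trans (max_le hP hQ), by simp [hP', hQ']⟩
  | neg x _ hx =>
    intro j
    obtain ⟨P, hP, hP'⟩ := hx j
    exact ⟨-P, by simpa using hP, by simp [hP']⟩
  | mul x y _ _ hx hy =>
    intro j
    choose P hP hP' using hx
    choose Q hQ hQ' using hy
    refine ⟨∑ p ∈ Finset.HasAntidiagonal.antidiagonal j, P p.1 * Q p.2, ?_, ?_⟩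
    · apply MvPolynomial.totalDegree_finsetSum_le
      intro p hp
      refine (totalDegree_mul _ _).trans ?_
      have := Finset.HasAntidiagonal.mem_antidiagonal.1 hp
      have h1 := hP p.1
      have h2 := hQ p.2
      omega
    · rw [map_sum, Polynomial.coeff_mul]
      apply Finset.sum_congr rfl
      intro p _
      rw [map_mul, hP', hQ']

theorem integral_eqn {n : ℕ} {B : Type} [CommRing B] [IsDomain B] [Algebra ℂ B] (F : Fin n → B)
    (g : B) (a : ℕ)
    (hO : ∀ O : ValuationSubring (FractionRing (Polynomial B)),
      (∀ y ∈ reesGens F, algebraMap (Polynomial B) (FractionRing (Polynomial B)) y ∈ O) →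
      algebraMap (Polynomial B) (FractionRing (Polynomial B)) (Polynomial.C g * Polynomial.X ^ a) ∈ O) :
    ∃ (r : ℕ) (c : ℕ → MvPolynomial (Fin n) ℂ), (∀ i < r, (c i).totalDegree ≤ a * (r - i)) ∧
      g ^ r = ∑ i ∈ Finset.range r, aeval F (c i) * g ^ i := by
  classical
  let L := FractionRing (Polynomial B)
  let ι : Polynomial B →+* L := algebraMap (Polynomial B) L
  have hι : Function.Injective ι := IsFractionRing.injective _ _
  set x : Polynomial B := Polynomial.C g * Polynomial.X ^ a with hx
  have h1 : ι x ∈ (integralClosure (Subring.closure (ι '' reesGens F)) L).toSubring := by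
    rw [← iInf_valuationSubring_superset, Subring.mem_iInf]
    rintro ⟨V, hV⟩
    exact hO V (fun y hy => hV ⟨y, hy, rfl⟩)
  obtain ⟨p, hp, hpx⟩ := h1
  have hq : ∀ i, ∃ q ∈ Subring.closure (reesGens F), ι q = (p.coeff i : L) := by
    intro i
    exact (RingHom.map_closure ι (reesGens F)).ge (p.coeff i).2
  choose q hq hq' using hq
  set r := p.natDegree with hr
  have h2 : x ^ r + ∑ i ∈ Finset.range r, q i * x ^ i = 0 := by
    apply hι
    rw [map_zero, map_add, map_sum]
    rw [Polynomial.eval₂_eq_sum_range, Finset.sum_range_succ, ← hr] at hpx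
    have : p.coeff r = 1 := hp
    rw [this, map_one, one_mul] at hpx
    rw [← hpx, add_comm, map_pow]
    congr 1
    apply Finset.sum_congr rfl
    intro i _
    rw [map_mul, map_pow, hq']
    rfl
  choose P hP hP' using fun i => rees_coeff F (q i) (hq i)
  refine ⟨r, fun i => - P i (a * (r - i)), ?_, ?_⟩
  · intro i _
    simpa using hP i _
  · have h3 := congrArg (fun z => Polynomial.coeff z (a * r)) h2
    simp only [Polynomial.coeff_add, Polynomial.finsetSum_coeff, Polynomial.coeff_zero] at h3
    have h4 : ∀ i, x ^ i = Polynomial.C (g ^ i) * Polynomial.X ^ (a * i) := by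
      intro i; rw [hx, mul_pow, ← pow_mul, Polynomial.C_pow]
    rw [h4 r, Polynomial.coeff_C_mul, Polynomial.coeff_X_pow_self, mul_one] at h3
    rw [eq_neg_of_add_eq_zero_left h3, ← Finset.sum_neg_distrib]
    apply Finset.sum_congr rfl
    intro i hi
    have hi' := Finset.mem_range.1 hi
    have h5 : a * r = a * (r - i) + a * i := by rw [← mul_add]; congr 1; omega
    rw [h4 i, ← mul_assoc, h5, Polynomial.coeff_mul_X_pow, Polynomial.coeff_mul_C, map_neg, hP', neg_mul]

end ToricProof

namespace ToricProof

theorem simul_approx {ι : Type*} [Fintype ι] (μ : ι → ℝ) (ε : ℝ) (hε : 0 < ε) :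
    ∃ (N : ℕ) (k : ι → ℤ), 1 ≤ N ∧ ∀ i, |(N : ℝ) * μ i - k i| < ε := by
  have hc : IsCompact (Set.univ.pi fun _ : ι => Set.Icc (0 : ℝ) 1) :=
    isCompact_univ_pi fun _ => isCompact_Icc
  let s : ℕ → ι → ℝ := fun N i => Int.fract ((N : ℝ) * μ i)
  obtain ⟨a, _, φ, hφ, hlim⟩ := hc.tendsto_subseq (x := s) (fun N i _ =>
    ⟨Int.fract_nonneg _, (Int.fract_lt_one _).le⟩)
  have hcs := hlim.cauchySeq
  rw [Metric.cauchySeq_iff] at hcs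
  obtain ⟨M, hM⟩ := hcs ε hε
  have h1 := hM (M + 1) (by omega) M le_rfl
  have h2 : φ M < φ (M + 1) := hφ (by omega)
  refine ⟨φ (M + 1) - φ M, fun i => ⌊(φ (M + 1) : ℝ) * μ i⌋ - ⌊(φ M : ℝ) * μ i⌋, by omega, ?_⟩
  intro i
  have h3 := (dist_le_pi_dist _ _ i).trans_lt h1
  rw [Real.dist_eq] at h3
  have h4 : (((φ (M + 1) - φ M : ℕ) : ℝ)) * μ i
      - ((⌊(φ (M + 1) : ℝ) * μ i⌋ - ⌊(φ M : ℝ) * μ i⌋ : ℤ) : ℝ)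
      = (s ∘ φ) (M + 1) i - (s ∘ φ) M i := by
    have e1 : (s ∘ φ) (M + 1) i = (φ (M + 1) : ℝ) * μ i - ⌊(φ (M + 1) : ℝ) * μ i⌋ :=
      (Int.self_sub_floor _).symm
    have e2 : (s ∘ φ) M i = (φ M : ℝ) * μ i - ⌊(φ M : ℝ) * μ i⌋ :=
      (Int.self_sub_floor _).symm
    rw [e1, e2, Nat.cast_sub h2.le, Int.cast_sub]
    ring
  rw [h4]
  exact h3

theorem real_to_int {ι σ : Type*} [Fintype ι] [Fintype σ] (z : ι → σ → ℤ) (μ : ι → ℝ)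
    (h : ∀ j, ∑ i, μ i * (z i j : ℝ) = 0) (i1 : ι) (hi1 : 0 < μ i1) :
    ∃ k : ι → ℤ, (∀ j, ∑ i, k i * z i j = 0) ∧ (∀ i, 0 ≤ μ i → 0 ≤ k i) ∧ 0 < k i1 := by
  classical
  -- normalize so that `μ i1 = 1`
  let μ' : ι → ℝ := fun i => μ i / μ i1
  let D : ℝ := ∑ i, ∑ j, |(z i j : ℝ)|
  have hD : 0 ≤ D := Finset.sum_nonneg fun _ _ => Finset.sum_nonneg fun _ _ => abs_nonneg _
  obtain ⟨N, k, hN, hk⟩ := simul_approx μ' (1 / (D + 1)) (by positivity)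
  have hN' : (1 : ℝ) ≤ N := by exact_mod_cast hN
  have hε1 : 1 / (D + 1) ≤ 1 := by
    rw [div_le_one (by positivity)]; linarith
  refine ⟨k, ?_, ?_, ?_⟩
  · intro j
    have h1 : ∑ i, μ' i * (z i j : ℝ) = 0 := by
      have : ∀ i, μ' i * (z i j : ℝ) = (μ i1)⁻¹ * (μ i * (z i j : ℝ)) := by
        intro i; simp only [μ']; ring
      simp_rw [this, ← Finset.mul_sum, h, mul_zero]
    have h2 : ((∑ i, k i * z i j : ℤ) : ℝ) = - ∑ i, ((N : ℝ) * μ' i - k i) * z i j := by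
      push_cast
      simp_rw [sub_mul, Finset.sum_sub_distrib, mul_assoc, ← Finset.mul_sum, h1]
      ring
    have h3 : |((∑ i, k i * z i j : ℤ) : ℝ)| < 1 := by
      rw [h2, abs_neg]
      calc |∑ i, ((N : ℝ) * μ' i - k i) * z i j|
          ≤ ∑ i, |((N : ℝ) * μ' i - k i) * z i j| := Finset.abs_sum_le_sum_abs _ _
        _ ≤ ∑ i, (1 / (D + 1)) * |(z i j : ℝ)| := by
            apply Finset.sum_le_sum
            intro i _
            rw [abs_mul]
            exact mul_le_mul_of_nonneg_right (hk i).le (abs_nonneg _)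
        _ = (1 / (D + 1)) * ∑ i, |(z i j : ℝ)| := by rw [Finset.mul_sum]
        _ ≤ (1 / (D + 1)) * D := by
            apply mul_le_mul_of_nonneg_left _ (by positivity)
            apply Finset.sum_le_sum
            intro i _
            exact Finset.single_le_sum (f := fun j => |(z i j : ℝ)|) (fun _ _ => abs_nonneg _) (Finset.mem_univ j)
        _ < 1 := by
            rw [one_div, inv_mul_lt_iff₀ (by positivity)]; linarith
    have h4 : |∑ i, k i * z i j| < 1 := by exact_mod_cast h3
    exact Int.abs_lt_one_iff.1 h4
  · intro i hi
    have h1 : 0 ≤ μ' i := div_nonneg hi hi1.le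
    have h2 := (abs_lt.1 (hk i)).2
    have h3 : 0 ≤ (N : ℝ) * μ' i := by positivity
    have h4 : (-1 : ℝ) < k i := by linarith
    have h5 : -1 < k i := by exact_mod_cast h4
    omega
  · have h1 : μ' i1 = 1 := div_self hi1.ne'
    have h2 := (abs_lt.1 (hk i1)).2
    rw [h1] at h2
    have h4 : (0 : ℝ) < k i1 := by linarith
    exact_mod_cast h4

/-- A real linear functional realizing the maximum pattern of a multiplicative weight. -/
theorem exists_functional {σ Γ : Type*} [Fintype σ] [LinearOrderedCommGroupWithZero Γ]
    (x : σ → Γ) (hx : ∀ i, x i ≠ 0) (E : Finset (σ →₀ ℕ)) (e0 : σ →₀ ℕ) :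
    ∃ l : (σ → ℝ) →ₗ[ℝ] ℝ, ∀ e ∈ E,
      (∏ i, x i ^ e i = ∏ i, x i ^ e0 i → l (fun i => (e i : ℝ)) = l (fun i => (e0 i : ℝ))) ∧
      (∏ i, x i ^ e i < ∏ i, x i ^ e0 i → l (fun i => (e i : ℝ)) < l (fun i => (e0 i : ℝ))) := by
  classical
  let w : (σ →₀ ℕ) → Γ := fun e => ∏ i, x i ^ e i
  let E0 := E.filter fun e => w e = w e0
  let E1 := E.filter fun e => w e < w e0
  let dl : (σ →₀ ℕ) → σ → ℝ := fun e i => (e i : ℝ) - (e0 i : ℝ)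
  let D : Submodule ℝ (σ → ℝ) := Submodule.span ℝ (dl '' E0)
  let K : Set (σ → ℝ) := convexHull ℝ (dl '' E1)
  have hdisj : Disjoint K (D : Set (σ → ℝ)) := by
    rw [Set.disjoint_left]
    intro y hyK hyD
    -- convex coefficients
    obtain ⟨μ, hμ0, hμ1, hμy⟩ : ∃ μ : E1 → ℝ, (∀ e, 0 ≤ μ e) ∧ ∑ e, μ e = 1 ∧
        ∑ e, μ e • dl e = y := by
      have h1 : y ∈ convexHull ℝ (Set.range fun e : E1 => dl e) := by
        have hr : (Set.range fun e : E1 => dl e) = dl '' E1 := by ext z; simp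
        rw [hr]; exact hyK
      rw [convexHull_range_eq_exists_affineCombination] at h1
      obtain ⟨s, ww, hw0, hw1, hwy⟩ := h1
      refine ⟨fun e => if e ∈ s then ww e else 0, ?_, ?_, ?_⟩
      · intro e; by_cases he : e ∈ s
        · simpa [he] using hw0 e he
        · simp [he]
      · rw [Finset.sum_ite_mem, Finset.univ_inter]; exact hw1
      · rw [Finset.affineCombination_eq_linear_combination _ _ _ hw1] at hwy
        rw [← hwy]
        simp only [ite_smul, zero_smul]
        rw [Finset.sum_ite_mem, Finset.univ_inter]
    obtain ⟨ν, hν⟩ : ∃ ν : E0 → ℝ, ∑ e, ν e • dl e = y := by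
      have h1 : y ∈ Submodule.span ℝ (Set.range fun e : E0 => dl e) := by
        have hr : (Set.range fun e : E0 => dl e) = dl '' E0 := by ext z; simp
        rw [hr]; exact hyD
      exact (Submodule.mem_span_range_iff_exists_fun ℝ).1 h1
    obtain ⟨e1, he1⟩ : ∃ e1 : E1, 0 < μ e1 := by
      by_contra hcon
      push Not at hcon
      have : ∑ e, μ e ≤ 0 := Finset.sum_nonpos fun e _ => hcon e
      linarith
    obtain ⟨k, hk, hk0, hk1⟩ := real_to_int (ι := E1 ⊕ E0)
      (fun s i => Sum.elim (fun e : E1 => (e.1 i : ℤ) - e0 i) (fun e : E0 => (e.1 i : ℤ) - e0 i) s)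
      (Sum.elim μ (fun e => - ν e)) (by
        intro j
        rw [Fintype.sum_sum_type]
        have h1 := congrFun hμy j
        have h2 := congrFun hν j
        simp only [Finset.sum_apply, Pi.smul_apply, smul_eq_mul, dl] at h1 h2
        simp only [Sum.elim_inl, Sum.elim_inr, neg_mul, Finset.sum_neg_distrib]
        push_cast
        rw [h1, h2]; ring) (Sum.inl e1) he1
    -- the product of the weights
    have hw0 : ∀ e, w e ≠ 0 := fun e => Finset.prod_ne_zero_iff.2 fun i _ => pow_ne_zero _ (hx i)
    have hW : ∀ e : σ →₀ ℕ, ∏ i, x i ^ ((e i : ℤ) - e0 i) = w e / w e0 := by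
      intro e
      simp only [w, ← Finset.prod_div_distrib]
      apply Finset.prod_congr rfl
      intro i _
      rw [zpow_sub₀ (hx i), zpow_natCast, zpow_natCast]
    have hprod : ∏ s : E1 ⊕ E0, (w (Sum.elim (fun e : E1 => e.1) (fun e : E0 => e.1) s) / w e0) ^ k s = 1 := by
      have h1 : ∀ s : E1 ⊕ E0, (w (Sum.elim (fun e : E1 => e.1) (fun e : E0 => e.1) s) / w e0) ^ k s
          = ∏ i, x i ^ (k s * (Sum.elim (fun e : E1 => (e.1 i : ℤ) - e0 i) (fun e : E0 => (e.1 i : ℤ) - e0 i) s)) := by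
        intro s
        rw [← hW, ← Finset.prod_zpow]
        apply Finset.prod_congr rfl
        intro i _
        rw [← zpow_mul, mul_comm]
        rcases s with s | s <;> rfl
      simp_rw [h1]
      rw [Finset.prod_comm]
      apply Finset.prod_eq_one
      intro i _
      have h2 : ∀ (s : Finset (E1 ⊕ E0)) (c : E1 ⊕ E0 → ℤ), ∏ t ∈ s, x i ^ c t = x i ^ (∑ t ∈ s, c t) := by
        intro s c
        induction s using Finset.induction_on with
        | empty => simp
        | insert a s ha ih => rw [Finset.prod_insert ha, Finset.sum_insert ha, ih, zpow_add₀ (hx i)]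
      rw [h2, hk i, zpow_zero]
    rw [Fintype.prod_sum_type] at hprod
    have hp2 : ∏ e : E0, (w (Sum.elim (fun e : E1 => e.1) (fun e : E0 => e.1) (Sum.inr e)) / w e0) ^ k (Sum.inr e) = 1 := by
      apply Finset.prod_eq_one
      intro e _
      have : w e.1 = w e0 := (Finset.mem_filter.1 e.2).2
      simp only [Sum.elim_inr]
      rw [this, div_self (hw0 _), one_zpow]
    rw [hp2, mul_one] at hprod
    have hlt : ∀ e : E1, w e.1 / w e0 < 1 := by
      intro e
      have : w e.1 < w e0 := (Finset.mem_filter.1 e.2).2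
      exact (div_lt_one₀ (zero_lt_iff.2 (hw0 _))).2 this
    have hpos : ∀ e : E1, 0 < w e.1 / w e0 := fun e => zero_lt_iff.2 (div_ne_zero (hw0 _) (hw0 _))
    have hle : ∀ e : E1, (w e.1 / w e0) ^ k (Sum.inl e) ≤ 1 := by
      intro e
      obtain ⟨m, hm⟩ := Int.eq_ofNat_of_zero_le (hk0 (Sum.inl e) (hμ0 e))
      rw [hm, zpow_natCast]
      exact pow_le_one₀ zero_le (hlt e).le
    have hlt1 : (w e1.1 / w e0) ^ k (Sum.inl e1) < 1 := by
      obtain ⟨m, hm⟩ := Int.eq_ofNat_of_zero_le hk1.le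
      rw [hm, zpow_natCast]
      refine pow_lt_one₀ zero_le (hlt e1) ?_
      rintro rfl
      simp [hm] at hk1
    have : ∏ e : E1, (w (Sum.elim (fun e : E1 => e.1) (fun e : E0 => e.1) (Sum.inl e)) / w e0) ^ k (Sum.inl e) < 1 := by
      rw [← Finset.mul_prod_erase _ _ (Finset.mem_univ e1)]
      simp only [Sum.elim_inl]
      refine lt_of_le_of_lt ?_ hlt1
      apply mul_le_of_le_one_right zero_le
      exact Finset.prod_le_one' fun e _ => hle e
    exact absurd hprod this.ne
  have hKc : IsCompact K := (E1.finite_toSet.image dl).isCompact_convexHull (𝕜 := ℝ)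
  have hDc : IsClosed (D : Set (σ → ℝ)) := D.closed_of_finiteDimensional
  have hKx : Convex ℝ K := convex_convexHull ℝ _
  have hDx : Convex ℝ (D : Set (σ → ℝ)) := D.convex
  obtain ⟨l, u, v, hl1, huv, hl2⟩ := geometric_hahn_banach_compact_closed hKx hKc hDx hDc hdisj
  have hD0 : ∀ y ∈ D, l y = 0 := by
    intro y hy
    by_contra hne
    have h1 := hl2 (((v - 1) / l y) • y) (D.smul_mem _ hy)
    rw [map_smul, smul_eq_mul, div_mul_cancel₀ _ hne] at h1
    linarith
  have hv : v < 0 := by simpa using hl2 0 D.zero_mem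
  have hdl : ∀ e, l (dl e) = l (fun i => (e i : ℝ)) - l (fun i => (e0 i : ℝ)) := by
    intro e; rw [← map_sub]; rfl
  refine ⟨l.toLinearMap, fun e he => ⟨fun h => ?_, fun h => ?_⟩⟩
  · have h1 := hD0 (dl e) (Submodule.subset_span ⟨e, Finset.mem_coe.2 (Finset.mem_filter.2 ⟨he, h⟩), rfl⟩)
    rw [hdl] at h1
    exact sub_eq_zero.1 h1
  · have h1 := hl1 (dl e) (subset_convexHull ℝ _ ⟨e, Finset.mem_coe.2 (Finset.mem_filter.2 ⟨he, h⟩), rfl⟩)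
    rw [hdl] at h1
    show l _ < l _
    linarith

end ToricProof

namespace ToricProof

open ToricNewton

section val

variable {n : ℕ} {Γ : Type*} [LinearOrderedCommGroupWithZero Γ]

/-- The monomial weight attached to a valuation. -/
noncomputable def wt (V : Valuation (MvPolynomial (Fin n) ℂ) Γ) (m : Fin n →₀ ℕ) : Γ := ∏ i, V (X i) ^ m i

theorem wt_add (V : Valuation (MvPolynomial (Fin n) ℂ) Γ) (m m' : Fin n →₀ ℕ) :
    wt V (m + m') = wt V m * wt V m' := by
  simp [wt, pow_add, Finset.prod_mul_distrib]

theorem V_monomial (V : Valuation (MvPolynomial (Fin n) ℂ) Γ) (m : Fin n →₀ ℕ) (c : ℂ) :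
    V (monomial m c) = V (C c) * wt V m := by
  rw [monomial_eq, map_mul, Finsupp.prod_fintype _ _ (by simp), map_prod]
  simp [wt]

theorem V_monomial_le (V : Valuation (MvPolynomial (Fin n) ℂ) Γ) (hC : ∀ c, V (C c) ≤ 1)
    (m : Fin n →₀ ℕ) (c : ℂ) : V (monomial m c) ≤ wt V m := by
  rw [V_monomial]
  exact mul_le_of_le_one_left zero_le (hC c)

theorem V_le (V : Valuation (MvPolynomial (Fin n) ℂ) Γ) (hC : ∀ c, V (C c) ≤ 1)
    (p : MvPolynomial (Fin n) ℂ) (γ : Γ) (h : ∀ m ∈ p.support, wt V m ≤ γ) : V p ≤ γ := by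
  rw [p.as_sum]
  exact V.map_sum_le fun m hm => (V_monomial_le V hC m _).trans (h m hm)

theorem V_lt (V : Valuation (MvPolynomial (Fin n) ℂ) Γ) (hC : ∀ c, V (C c) ≤ 1)
    (p : MvPolynomial (Fin n) ℂ) (γ : Γ) (hγ : γ ≠ 0) (h : ∀ m ∈ p.support, wt V m < γ) :
    V p < γ := by
  rw [p.as_sum]
  exact V.map_sum_lt hγ fun m hm => (V_monomial_le V hC m _).trans_lt (h m hm)

open Classical in
/-- Truncation of a polynomial to the exponents satisfying `P`. -/
noncomputable def restr (P : (Fin n →₀ ℕ) → Prop) (b : MvPolynomial (Fin n) ℂ) :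
    MvPolynomial (Fin n) ℂ :=
  ∑ m ∈ b.support, if P m then monomial m (b.coeff m) else 0

theorem restr_mem (P : (Fin n →₀ ℕ) → Prop) (b : MvPolynomial (Fin n) ℂ) :
    restr P b ∈ restrictSupport ℂ {m | m ∈ b.support ∧ P m} := by
  classical
  refine Submodule.sum_mem _ fun m hm => ?_
  split_ifs with h
  · exact (monomial_mem_restrictSupport ℂ).2 (Or.inl ⟨hm, h⟩)
  · exact Submodule.zero_mem _

theorem restr_supp (P : (Fin n →₀ ℕ) → Prop) (b : MvPolynomial (Fin n) ℂ) (m : Fin n →₀ ℕ)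
    (hm : m ∈ (restr P b).support) : m ∈ b.support ∧ P m :=
  (mem_restrictSupport_iff ℂ).1 (restr_mem P b) hm

theorem restr_add (P : (Fin n →₀ ℕ) → Prop) (b : MvPolynomial (Fin n) ℂ) :
    restr P b + restr (fun m => ¬ P m) b = b := by
  classical
  conv_rhs => rw [b.as_sum]
  rw [restr, restr, ← Finset.sum_add_distrib]
  refine Finset.sum_congr rfl fun m _ => ?_
  by_cases h : P m <;> simp [h]

theorem supp_euler (f : MvPolynomial (Fin n) ℂ) (i : Fin n) :
    (X i * pderiv i f).support ⊆ f.support := by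
  have : X i * pderiv i f ∈ restrictSupport ℂ (f.support : Set (Fin n →₀ ℕ)) := by
    have h : X i * pderiv i f
        = ∑ m ∈ f.support, X i * pderiv i (monomial m (f.coeff m)) := by
      rw [← Finset.mul_sum, ← map_sum, ← f.as_sum]
    rw [h]
    refine Submodule.sum_mem _ fun m hm => ?_
    rw [X_mul_pderiv_monomial]
    exact Submodule.smul_of_tower_mem _ _ ((monomial_mem_restrictSupport ℂ).2 (Or.inl hm))
  exact_mod_cast (mem_restrictSupport_iff ℂ).1 this

theorem val_core (f : MvPolynomial (Fin n) ℂ) (hnd : Nondegenerate f)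
    (V : Valuation (MvPolynomial (Fin n) ℂ) Γ) (hX : ∀ i, V (X i) ≠ 0) (hC : ∀ c, V (C c) ≤ 1)
    (τ : Γ) (hτ1 : τ ≤ 1) (hF : ∀ i, τ * V (X i * pderiv i f) ≤ 1) :
    ∀ e ∈ f.support, τ * wt V e ≤ 1 := by
  classical
  have hw0 : ∀ e, wt V e ≠ 0 := fun e =>
    Finset.prod_ne_zero_iff.2 fun i _ => pow_ne_zero _ (hX i)
  by_contra hcon
  push Not at hcon
  obtain ⟨e', he', hlt'⟩ := hcon
  obtain ⟨e0, he0, hmax⟩ := Finset.exists_max_image (insert 0 f.support) (wt V)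
    ⟨0, Finset.mem_insert_self _ _⟩
  have hlt0 : 1 < τ * wt V e0 :=
    hlt'.trans_le (mul_le_mul_right (hmax e' (Finset.mem_insert_of_mem he')) τ)
  have hw1 : wt V 0 = 1 := by simp [wt]
  have h1lt : 1 < wt V e0 := hlt0.trans_le (mul_le_of_le_one_left zero_le hτ1)
  have he0f : e0 ∈ f.support := by
    rcases Finset.mem_insert.1 he0 with h | h
    · rw [h, hw1] at h1lt; exact absurd h1lt (lt_irrefl _)
    · exact h
  obtain ⟨l, hl⟩ := exists_functional (fun i => V (X i)) hX (insert 0 f.support) e0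
  have hl1 : ∀ e ∈ insert 0 f.support, wt V e = wt V e0 → l (toR e) = l (toR e0) :=
    fun e he => (hl e he).1
  have hl2 : ∀ e ∈ insert 0 f.support, wt V e < wt V e0 → l (toR e) < l (toR e0) :=
    fun e he => (hl e he).2
  have htoR0 : toR (0 : Fin n →₀ ℕ) = 0 := by ext i; simp [toR]
  let c := l (toR e0)
  let Δ : Set (Fin n → ℝ) := {x ∈ newtonPolytope f | l x = c}
  have hmemP : ∀ e ∈ f.support, toR e ∈ newtonPolytope f := fun e he =>
    subset_convexHull ℝ _ (Or.inr ⟨e, he, rfl⟩)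
  have hlle : ∀ e ∈ insert 0 f.support, l (toR e) ≤ c := by
    intro e he
    rcases (hmax e he).lt_or_eq with h | h
    · exact (hl2 e he h).le
    · exact (hl1 e he h).le
  have hΔ : NBFace f Δ := by
    refine ⟨⟨⟨toR e0, hmemP e0 he0f, rfl⟩, l, c, ?_, rfl⟩, ?_⟩
    · have hcv : Convex ℝ {x | l x ≤ c} := convex_halfSpace_le l.isLinear c
      apply convexHull_min _ hcv
      rintro x (hx | ⟨e, he, rfl⟩)
      · rw [Set.mem_singleton_iff] at hx
        subst hx
        have := hlle 0 (Finset.mem_insert_self _ _)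
        rwa [htoR0] at this
      · exact hlle e (Finset.mem_insert_of_mem he)
    · rintro ⟨_, h0⟩
      have := hl2 0 (Finset.mem_insert_self _ _) (by rwa [hw1])
      rw [htoR0, h0] at this
      exact lt_irrefl _ this
  have hΔ' : ∀ e ∈ f.support, (toR e ∈ Δ ↔ wt V e = wt V e0) := by
    intro e he
    constructor
    · rintro ⟨_, h⟩
      by_contra hne
      have := hl2 e (Finset.mem_insert_of_mem he)
        (lt_of_le_of_ne (hmax e (Finset.mem_insert_of_mem he)) hne)
      exact this.ne h
    · intro h
      exact ⟨hmemP e he, hl1 e (Finset.mem_insert_of_mem he) h⟩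
  have hnone := hnd Δ hΔ
  let G : Fin n → MvPolynomial (Fin n) ℂ := fun i => faceRestrict Δ (X i * pderiv i f)
  have hGr : ∀ i, G i = restr (fun m => toR m ∈ Δ) (X i * pderiv i f) := fun i => by
    simp only [G, faceRestrict, restr]
  have hGs : ∀ i, ∀ m ∈ (G i).support, wt V m = wt V e0 := by
    intro i m hm
    rw [hGr] at hm
    obtain ⟨h1, h2⟩ := restr_supp _ _ m hm
    exact (hΔ' m (supp_euler f i h1)).1 h2
  have hGV : ∀ i, V (G i) < wt V e0 := by
    intro i
    have h1 : G i = X i * pderiv i f - restr (fun m => ¬ toR m ∈ Δ) (X i * pderiv i f) := by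
      rw [hGr, eq_sub_iff_add_eq, restr_add]
    rw [h1]
    refine V.map_sub_lt ?_ (V_lt V hC _ _ (hw0 _) ?_)
    · have := (hF i).trans_lt hlt0
      exact lt_of_mul_lt_mul_left this zero_le
    · intro m hm
      obtain ⟨h2, h3⟩ := restr_supp _ _ m hm
      have h4 := supp_euler f i h2
      refine lt_of_le_of_ne (hmax m (Finset.mem_insert_of_mem h4)) fun h5 => h3 ((hΔ' m h4).2 h5)
  have hrad : (∏ j, X j : MvPolynomial (Fin n) ℂ) ∈ (Ideal.span (Set.range G)).radical := by
    rw [← vanishingIdeal_zeroLocus_eq_radical (K := ℂ), mem_vanishingIdeal_iff]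
    intro x hx
    rw [mem_zeroLocus_iff] at hx
    by_contra hne
    apply hnone
    refine ⟨x, fun i hi => hne ?_, fun i => ?_⟩
    · rw [map_prod]
      exact Finset.prod_eq_zero (Finset.mem_univ i) (by simp [hi])
    · have := hx (G i) (Ideal.subset_span ⟨i, rfl⟩)
      rwa [MvPolynomial.aeval_eq_eval] at this
  obtain ⟨N, hN⟩ := hrad
  obtain ⟨b, hb⟩ := Ideal.mem_span_range_iff_exists_fun.1 hN
  let m1 : Fin n →₀ ℕ := Finsupp.equivFunOnFinite.symm fun _ => N
  have hm1 : (∏ j, X j : MvPolynomial (Fin n) ℂ) ^ N = monomial m1 1 := by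
    rw [monomial_eq, Finsupp.prod_fintype _ _ (by simp)]
    simp [m1, Finset.prod_pow]
  let γ := wt V m1 / wt V e0
  have hγ : γ * wt V e0 = wt V m1 := div_mul_cancel₀ _ (hw0 _)
  let b1 := fun i => restr (fun m => wt V m = γ) (b i)
  let b2 := fun i => restr (fun m => ¬ wt V m = γ) (b i)
  have hb12 : monomial m1 1 - ∑ i, b1 i * G i = ∑ i, b2 i * G i := by
    rw [← hm1, ← hb, ← Finset.sum_sub_distrib]
    refine Finset.sum_congr rfl fun i _ => ?_
    rw [← sub_mul]
    congr 1
    rw [sub_eq_iff_eq_add', restr_add]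
  have hz1 : monomial m1 1 - ∑ i, b1 i * G i ∈ restrictSupport ℂ {m | wt V m = wt V m1} := by
    refine Submodule.sub_mem _ ((monomial_mem_restrictSupport ℂ).2 (Or.inl rfl))
      (Submodule.sum_mem _ fun i _ => ?_)
    rw [mem_restrictSupport_iff]
    intro m hm
    obtain ⟨p, hp, q, hq, rfl⟩ := Finset.mem_add.1 (support_mul _ _ hm)
    have h1 := (restr_supp _ _ p hp).2
    have h2 := hGs i q hq
    show wt V (p + q) = wt V m1
    rw [wt_add, h1, h2, hγ]
  have hz2 : ∑ i, b2 i * G i ∈ restrictSupport ℂ {m | wt V m ≠ wt V m1} := by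
    refine Submodule.sum_mem _ fun i _ => ?_
    rw [mem_restrictSupport_iff]
    intro m hm
    obtain ⟨p, hp, q, hq, rfl⟩ := Finset.mem_add.1 (support_mul _ _ hm)
    have h1 := (restr_supp _ _ p hp).2
    have h2 := hGs i q hq
    show wt V (p + q) ≠ wt V m1
    rw [wt_add, h2, ← hγ]
    intro h3
    exact h1 (mul_right_cancel₀ (hw0 e0) h3)
  have hz : ∑ i, b2 i * G i = 0 := by
    rw [← support_eq_empty, Finset.eq_empty_iff_forall_notMem]
    intro m hm
    rw [← hb12] at hm
    have h1 := (mem_restrictSupport_iff ℂ).1 hz1 hm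
    rw [hb12] at hm
    exact (mem_restrictSupport_iff ℂ).1 hz2 hm h1
  rw [hz, sub_eq_zero] at hb12
  have hV1 : V (monomial m1 1) = wt V m1 := by rw [V_monomial]; simp
  have hV2 : V (∑ i, b1 i * G i) < wt V m1 := by
    refine V.map_sum_lt (hw0 _) fun i _ => ?_
    rw [map_mul, ← hγ]
    have hγ0 : 0 < γ := zero_lt_iff.2 (div_ne_zero (hw0 _) (hw0 _))
    have h1 : V (b1 i) ≤ γ := V_le V hC _ _ fun m hm => (restr_supp _ _ m hm).2.le
    exact mul_lt_mul_of_le_of_lt_of_nonneg_of_pos h1 (hGV i) zero_le hγ0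
  rw [← hb12, hV1] at hV2
  exact lt_irrefl _ hV2

end val

end ToricProof

namespace ToricProof

open ToricNewton
open scoped Pointwise

section mono

variable {n : ℕ} {Γ : Type*} [LinearOrderedCommGroupWithZero Γ]

theorem zero_mem_P (f : MvPolynomial (Fin n) ℂ) : (0 : Fin n → ℝ) ∈ newtonPolytope f :=
  subset_convexHull ℝ _ (Or.inl rfl)

theorem exists_smul_mem (f : MvPolynomial (Fin n) ℂ) (hconv : Convenient f) (m : Fin n →₀ ℕ) :
    ∃ r : ℝ, 0 < r ∧ toR m ∈ r • newtonPolytope f := by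
  have hcx : Convex ℝ (newtonPolytope f) := convex_convexHull ℝ _
  induction m using Finsupp.induction with
  | zero =>
    refine ⟨1, one_pos, ?_⟩
    have : toR (0 : Fin n →₀ ℕ) = 0 := by ext i; simp [toR]
    rw [one_smul, this]
    exact zero_mem_P f
  | single_add i k m' _ hk ih =>
    obtain ⟨r, hr, hmem⟩ := ih
    obtain ⟨j, hj, hcoeff⟩ := hconv i
    have hj' : (0 : ℝ) < j := by exact_mod_cast hj
    have hk' : (0 : ℝ) < k := by exact_mod_cast Nat.pos_of_ne_zero hk
    have h1 : toR (Finsupp.single i k) ∈ ((k : ℝ) / j) • newtonPolytope f := by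
      refine ⟨toR (Finsupp.single i j), subset_convexHull ℝ _
        (Or.inr ⟨_, by simpa [mem_support_iff] using hcoeff, rfl⟩), ?_⟩
      ext t
      by_cases ht : t = i
      · subst ht; simp [toR]; field_simp
      · simp [toR, Ne.symm ht]
    refine ⟨(k : ℝ) / j + r, by positivity, ?_⟩
    rw [hcx.add_smul (by positivity) hr.le]
    refine ⟨_, h1, _, hmem, ?_⟩
    ext t; simp [toR]

theorem mem_P_coeffs (f : MvPolynomial (Fin n) ℂ) (p : Fin n → ℝ) (hp : p ∈ newtonPolytope f) :
    ∃ lam : (Fin n →₀ ℕ) → ℝ, (∀ e, 0 ≤ lam e) ∧ ∑ e ∈ f.support, lam e ≤ 1 ∧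
      ∀ i, p i = ∑ e ∈ f.support, lam e * (e i : ℝ) := by
  classical
  have hcx : Convex ℝ {p : Fin n → ℝ | ∃ lam : (Fin n →₀ ℕ) → ℝ, (∀ e, 0 ≤ lam e) ∧
      ∑ e ∈ f.support, lam e ≤ 1 ∧ ∀ i, p i = ∑ e ∈ f.support, lam e * (e i : ℝ)} := by
    rintro x ⟨l1, h1, h2, h3⟩ y ⟨l2, h4, h5, h6⟩ a b ha hb hab
    refine ⟨fun e => a * l1 e + b * l2 e, fun e => ?_, ?_, fun i => ?_⟩
    · have := h1 e; have := h4 e; positivity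
    · rw [Finset.sum_add_distrib, ← Finset.mul_sum, ← Finset.mul_sum]
      nlinarith
    · simp only [Pi.add_apply, Pi.smul_apply, smul_eq_mul, h3 i, h6 i, add_mul,
        Finset.sum_add_distrib, Finset.mul_sum, mul_assoc]
  refine convexHull_min ?_ hcx hp
  rintro x (hx | ⟨e, he, rfl⟩)
  · rw [Set.mem_singleton_iff] at hx
    subst hx
    exact ⟨0, by simp, by simp, by simp⟩
  · refine ⟨fun e' => if e' = e then 1 else 0, fun e' => by dsimp only; split_ifs <;> simp, ?_, fun i => ?_⟩
    · rw [Finset.sum_ite_eq' f.support e]; split_ifs <;> simp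
    · have he' : e ∈ f.support := he
      simp only [ite_mul, one_mul, zero_mul]
      rw [Finset.sum_ite_eq' f.support e, if_pos he']
      rfl

theorem wt_smul (V : Valuation (MvPolynomial (Fin n) ℂ) Γ) (N : ℕ) (m : Fin n →₀ ℕ) :
    wt V (N • m) = wt V m ^ N := by
  simp only [wt, Finsupp.smul_apply, smul_eq_mul, ← Finset.prod_pow]
  refine Finset.prod_congr rfl fun i _ => ?_
  rw [← pow_mul, mul_comm]

theorem wt_sum (V : Valuation (MvPolynomial (Fin n) ℂ) Γ) (s : Finset (Fin n →₀ ℕ))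
    (g : (Fin n →₀ ℕ) → (Fin n →₀ ℕ)) :
    wt V (∑ e ∈ s, g e) = ∏ e ∈ s, wt V (g e) := by
  classical
  induction s using Finset.induction_on with
  | empty => simp [wt]
  | insert a s ha ih => rw [Finset.sum_insert ha, Finset.prod_insert ha, wt_add, ih]

theorem mono_core (f : MvPolynomial (Fin n) ℂ) (hconv : Convenient f)
    (V : Valuation (MvPolynomial (Fin n) ℂ) Γ) (τ : Γ) (hτ1 : τ ≤ 1)
    (hE : ∀ e ∈ f.support, τ * wt V e ≤ 1) (m : Fin n →₀ ℕ) (a d : ℕ) (hd : 0 < d)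
    (hm : nu f (toR m) < (a : ℝ) / d) : τ ^ a * wt V m ^ d ≤ 1 := by
  classical
  have hx : ∀ i, τ * V (X i) ≤ 1 := by
    intro i
    obtain ⟨k, hk, hck⟩ := hconv i
    have h1 := hE (Finsupp.single i k) (by simpa [mem_support_iff] using hck)
    have h2 : wt V (Finsupp.single i k) = V (X i) ^ k := by
      rw [wt, Finset.prod_eq_single i]
      · simp
      · intro j _ hj; simp [Ne.symm hj]
      · simp
    rw [h2] at h1
    by_contra hcon
    push Not at hcon
    have h3 : 1 < (τ * V (X i)) ^ k := one_lt_pow₀ hcon (by omega)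
    rw [mul_pow] at h3
    have h4 : τ ^ k ≤ τ := pow_le_of_le_one zero_le hτ1 (by omega)
    exact absurd (h3.trans_le ((mul_le_mul_left h4 _).trans h1)) (lt_irrefl _)
  obtain ⟨s, ⟨hs0, p, hp, hsp⟩, hs⟩ := exists_lt_of_csInf_lt (exists_smul_mem f hconv m) hm
  obtain ⟨lam, hl0, hl1, hlp⟩ := mem_P_coeffs f p hp
  have hmi : ∀ i, (m i : ℝ) = ∑ e ∈ f.support, (s * lam e) * (e i : ℝ) := by
    intro i
    have h1 := congrFun hsp i
    simp only [Pi.smul_apply, smul_eq_mul, toR] at h1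
    rw [← h1, hlp i, Finset.mul_sum]
    exact Finset.sum_congr rfl fun e _ => by ring
  let c : Fin n → ℕ := fun i => ∑ e ∈ f.support, e i
  let Ct : ℕ := ∑ i, c i
  have hd' : (0 : ℝ) < d := by exact_mod_cast hd
  have hgap : 0 < (a : ℝ) - d * s := by
    rw [lt_div_iff₀ hd'] at hs; linarith
  obtain ⟨N, hN⟩ := exists_nat_ge ((d : ℝ) * Ct / ((a : ℝ) - d * s) + 1)
  have hN1 : 1 ≤ N := by
    have : (0 : ℝ) ≤ (d : ℝ) * Ct / ((a : ℝ) - d * s) := by positivity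
    have h2 : (1 : ℝ) ≤ N := by linarith
    exact_mod_cast h2
  have hN2 : (d : ℝ) * (N * s + Ct) ≤ a * N := by
    have h1 : (d : ℝ) * Ct / ((a : ℝ) - d * s) ≤ N := by linarith
    rw [div_le_iff₀ hgap] at h1
    linarith
  let k : (Fin n →₀ ℕ) → ℕ := fun e => ⌊(N : ℝ) * (s * lam e)⌋₊
  have hk1 : ∀ e, (k e : ℝ) ≤ N * (s * lam e) := fun e =>
    Nat.floor_le (by have := hl0 e; positivity)
  have hk2 : ∀ e, (N : ℝ) * (s * lam e) ≤ k e + 1 := fun e => (Nat.lt_floor_add_one _).le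
  let S : Fin n →₀ ℕ := ∑ e ∈ f.support, k e • e
  have hSi : ∀ i, S i = ∑ e ∈ f.support, k e * e i := by
    intro i; simp [S, Finsupp.finsetSum_apply]
  have hSle : S ≤ N • m := by
    intro i
    have : (S i : ℝ) ≤ N * m i := by
      rw [hSi, hmi, Finset.mul_sum]
      push_cast
      refine Finset.sum_le_sum fun e _ => ?_
      rw [← mul_assoc]
      exact mul_le_mul_of_nonneg_right (hk1 e) (Nat.cast_nonneg _)
    simp only [Finsupp.smul_apply, smul_eq_mul]
    exact_mod_cast this
  let r : Fin n →₀ ℕ := N • m - S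
  have hr : S + r = N • m := add_tsub_cancel_of_le hSle
  have hrc : ∀ i, r i ≤ c i := by
    intro i
    have h1 : S i + r i = N * m i := by
      rw [← Finsupp.add_apply, hr]; simp
    have h2 : (N : ℝ) * m i ≤ S i + c i := by
      rw [hSi, hmi, Finset.mul_sum]
      simp only [c]
      push_cast
      rw [← Finset.sum_add_distrib]
      refine Finset.sum_le_sum fun e _ => ?_
      have h3 := mul_le_mul_of_nonneg_right (hk2 e) (Nat.cast_nonneg (α := ℝ) (e i))
      linarith
    have h3 : N * m i ≤ S i + c i := by exact_mod_cast h2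
    omega
  let q : ℕ := ∑ e ∈ f.support, k e + ∑ i, r i
  have hq : d * q ≤ a * N := by
    have h1 : (q : ℝ) ≤ N * s + Ct := by
      simp only [q, Ct]
      push_cast
      have h2 : ∑ e ∈ f.support, (k e : ℝ) ≤ N * s := by
        calc ∑ e ∈ f.support, (k e : ℝ) ≤ ∑ e ∈ f.support, (N : ℝ) * (s * lam e) :=
              Finset.sum_le_sum fun e _ => hk1 e
          _ = N * s * ∑ e ∈ f.support, lam e := by
              rw [Finset.mul_sum]; exact Finset.sum_congr rfl fun e _ => by ring
          _ ≤ N * s * 1 := mul_le_mul_of_nonneg_left hl1 (by positivity)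
          _ = N * s := mul_one _
      have h3 : ∑ i, (r i : ℝ) ≤ ∑ i, (c i : ℝ) :=
        Finset.sum_le_sum fun i _ => by exact_mod_cast hrc i
      linarith
    have h2 : (d : ℝ) * q ≤ a * N := (mul_le_mul_of_nonneg_left h1 hd'.le).trans hN2
    exact_mod_cast h2
  have hmain : τ ^ q * wt V m ^ N ≤ 1 := by
    rw [← wt_smul, ← hr, wt_add, wt_sum]
    have h1 : τ ^ q * ((∏ e ∈ f.support, wt V (k e • e)) * wt V r)
        = (∏ e ∈ f.support, (τ * wt V e) ^ k e) * ∏ i, (τ * V (X i)) ^ r i := by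
      simp only [q, pow_add, mul_pow, Finset.prod_mul_distrib, wt_smul,
        Finset.prod_pow_eq_pow_sum]
      rw [wt]
      ac_rfl
    rw [h1]
    exact mul_le_one' (Finset.prod_le_one' fun e he => pow_le_one₀ zero_le (hE e he))
      (Finset.prod_le_one' fun i _ => pow_le_one₀ zero_le (hx i))
  by_contra hcon
  push Not at hcon
  have h1 : 1 < (τ ^ a * wt V m ^ d) ^ N := one_lt_pow₀ hcon (by omega)
  have h2 : (τ ^ a * wt V m ^ d) ^ N ≤ (τ ^ q * wt V m ^ N) ^ d := by
    rw [mul_pow, mul_pow, ← pow_mul, ← pow_mul, ← pow_mul, ← pow_mul, mul_comm N d, mul_comm q d]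
    exact mul_le_mul_left (pow_le_pow_of_le_one zero_le hτ1 hq) _
  exact absurd (h1.trans_le (h2.trans (pow_le_one₀ zero_le hmain))) (lt_irrefl _)

end mono

end ToricProof

namespace ToricProof

open ToricNewton

section comb

variable {n : ℕ}

theorem mem_O (f : MvPolynomial (Fin n) ℂ) (hconv : Convenient f) (hnd : Nondegenerate f)
    (h : MvPolynomial (Fin n) ℂ) (a d : ℕ) (hd : 0 < d)
    (hh : ∀ m ∈ h.support, nu f (toR m) < (a : ℝ) / d)
    (O : ValuationSubring (FractionRing (Polynomial (MvPolynomial (Fin n) ℂ))))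
    (hO : ∀ y ∈ reesGens (fun i => X i * pderiv i f),
      algebraMap _ (FractionRing (Polynomial (MvPolynomial (Fin n) ℂ))) y ∈ O) :
    algebraMap _ (FractionRing (Polynomial (MvPolynomial (Fin n) ℂ)))
      (Polynomial.C (h ^ d) * Polynomial.X ^ a) ∈ O := by
  classical
  let ι := algebraMap (Polynomial (MvPolynomial (Fin n) ℂ))
    (FractionRing (Polynomial (MvPolynomial (Fin n) ℂ)))
  have hι : Function.Injective ι := IsFractionRing.injective _ _
  let V : Valuation (MvPolynomial (Fin n) ℂ) O.ValueGroup :=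
    O.valuation.comap (ι.comp Polynomial.C)
  have hV : ∀ b, V b = O.valuation (ι (Polynomial.C b)) := fun b => rfl
  let τ : O.ValueGroup := O.valuation (ι Polynomial.X)
  have hτ1 : τ ≤ 1 := (O.valuation_le_one_iff _).2 (hO _ (Or.inl (Or.inr rfl)))
  have hC : ∀ c, V (C c) ≤ 1 := fun c =>
    (O.valuation_le_one_iff _).2 (hO _ (Or.inl (Or.inl ⟨c, rfl⟩)))
  have hF : ∀ i, τ * V (X i * pderiv i f) ≤ 1 := by
    intro i
    have := (O.valuation_le_one_iff _).2 (hO _ (Or.inr ⟨i, rfl⟩))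
    rw [map_mul, map_mul] at this
    exact this
  have hX : ∀ i, V (X i) ≠ 0 := by
    intro i
    rw [hV, Valuation.ne_zero_iff, Ne, map_eq_zero_iff ι hι, Polynomial.C_eq_zero]
    exact X_ne_zero i
  have hE := val_core f hnd V hX hC τ hτ1 hF
  rw [← O.valuation_le_one_iff, map_mul, map_mul, map_pow, map_pow, map_pow, map_pow, map_pow]
  change V h ^ d * τ ^ a ≤ 1
  by_cases h0 : h = 0
  · rw [h0, map_zero, zero_pow hd.ne', zero_mul]; exact zero_le
  obtain ⟨m, hm, hmax⟩ := Finset.exists_max_image h.support (wt V) (support_nonempty.2 h0)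
  have h1 : V h ≤ wt V m := V_le V hC h _ hmax
  have h2 := mono_core f hconv V τ hτ1 hE m a d hd (hh m hm)
  rw [mul_comm]
  exact (mul_le_mul_right (pow_le_pow_left₀ zero_le h1 d) _).trans h2

theorem integral_all (f : MvPolynomial (Fin n) ℂ) (hconv : Convenient f) (hnd : Nondegenerate f)
    (b : MvPolynomial (Fin n) ℂ) :
    ((aeval (fun i => X i * pderiv i f) : MvPolynomial (Fin n) ℂ →ₐ[ℂ] MvPolynomial (Fin n) ℂ) :
      MvPolynomial (Fin n) ℂ →+* MvPolynomial (Fin n) ℂ).IsIntegralElem b := by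
  classical
  induction b using MvPolynomial.induction_on with
  | C c =>
    have := RingHom.isIntegralElem_map
      ((aeval (fun i => X i * pderiv i f) : MvPolynomial (Fin n) ℂ →ₐ[ℂ] MvPolynomial (Fin n) ℂ) :
      MvPolynomial (Fin n) ℂ →+* MvPolynomial (Fin n) ℂ) (x := C c)
    simpa using this
  | add p q hp hq => exact RingHom.IsIntegralElem.add _ hp hq
  | mul_X p i hp =>
    refine RingHom.IsIntegralElem.mul _ hp ?_
    obtain ⟨a, ha⟩ := exists_nat_gt (nu f (toR (Finsupp.single i 1)))
    obtain ⟨r, c, _, hr⟩ := integral_eqn (fun i => X i * pderiv i f)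
      (X i : MvPolynomial (Fin n) ℂ) a (fun O hO => by
        have := mem_O f hconv hnd (X i) a 1 one_pos (by
          intro m hm
          rw [support_X, Finset.mem_singleton] at hm
          subst hm
          simpa using ha) O hO
        rwa [pow_one] at this)
    refine ⟨Polynomial.X ^ r - ∑ i ∈ Finset.range r, Polynomial.C (c i) * Polynomial.X ^ i, ?_, ?_⟩
    · apply Polynomial.monic_X_pow_sub
      rw [← Polynomial.mem_degreeLT]
      refine Submodule.sum_mem _ fun j hj => ?_
      rw [Polynomial.mem_degreeLT]
      exact (Polynomial.degree_C_mul_X_pow_le _ _).trans_lt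
        (by exact_mod_cast Finset.mem_range.1 hj)
    · rw [Polynomial.eval₂_sub, Polynomial.eval₂_finsetSum]
      simp only [Polynomial.eval₂_mul, Polynomial.eval₂_pow, Polynomial.eval₂_X,
        Polynomial.eval₂_C]
      rw [hr]
      exact sub_self _

theorem L_inter (f : MvPolynomial (Fin n) ℂ) (hconv : Convenient f) (hnd : Nondegenerate f)
    (α : ℝ) (hα : α < 1) (h : MvPolynomial (Fin n) ℂ) (hN : h ∈ Nle f α) (hL : h ∈ LIdeal f) :
    h = 0 := by
  classical
  by_cases h0 : h = 0
  · exact h0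
  obtain ⟨m, hm⟩ := support_nonempty.2 h0
  have hα0 : 0 ≤ α := (gauge_nonneg _).trans (hN m hm)
  obtain ⟨q, hq1, hq2⟩ := exists_rat_btwn hα
  have hq0 : 0 ≤ q := by exact_mod_cast (hα0.trans hq1.le)
  have hq3 : q < 1 := by exact_mod_cast hq2
  obtain ⟨a, ha⟩ := Int.eq_ofNat_of_zero_le (Rat.num_nonneg.2 hq0)
  have hd : 0 < q.den := q.den_pos
  have hqe : (q : ℝ) = (a : ℝ) / q.den := by
    conv_lhs => rw [← Rat.num_div_den q, ha]
    push_cast; rfl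
  have had : a < q.den := by
    rw [hqe, div_lt_one (by exact_mod_cast hd)] at hq2
    exact_mod_cast hq2
  obtain ⟨r, c, hc, hr⟩ := integral_eqn (fun i => X i * pderiv i f) (h ^ q.den) a
    (fun O hO => mem_O f hconv hnd h a q.den hd
      (fun m hm => (hN m hm).trans_lt (by rw [← hqe]; exact hq1)) O hO)
  have := core (fun i => X i * pderiv i f) inferInstance
    (by rw [MvPolynomial.trdeg_of_isDomain]; simp)
    (integral_all f hconv hnd) (h ^ q.den) a q.den r had c hc hr (Ideal.pow_mem_pow hL _)
  exact eq_zero_of_pow_eq_zero this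

end comb

end ToricProof

namespace ToricProof

open ToricNewton

theorem final {n : ℕ} (f : MvPolynomial (Fin n) ℂ)
    (hconv : Convenient f) (hnd : Nondegenerate f) (α : ℝ) (hα : α < 1) :
    grDim f α = {v : Fin n → ℕ | nu f (natToR v) = α}.ncard := by
  classical
  let S : Set (Fin n →₀ ℕ) := {m | nu f (toR m) = α}
  let v' : S → MvPolynomial (Fin n) ℂ := fun m => monomial m.1 1
  have hli' : LinearIndependent ℂ v' := by
    have := (basisMonomials (Fin n) ℂ).linearIndependent.comp (fun m : S => m.1)
      Subtype.val_injective
    have hv : v' = (basisMonomials (Fin n) ℂ) ∘ (fun m : S => m.1) := by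
      funext m
      simp [v']
    rw [hv]
    exact this
  have hspan_le : Submodule.span ℂ (Set.range v') ≤ restrictSupport ℂ S := by
    rw [Submodule.span_le]
    rintro _ ⟨m, rfl⟩
    exact (monomial_mem_restrictSupport ℂ).2 (Or.inl m.2)
  have hspan_supp : ∀ p ∈ Submodule.span ℂ (Set.range v'), ∀ m ∈ p.support,
      nu f (toR m) = α := fun p hp m hm =>
    (mem_restrictSupport_iff ℂ).1 (hspan_le hp) hm
  let Q := Nlt f α ⊔ (LIdeal f).restrictScalars ℂ
  have hlt_le : ∀ p ∈ Nlt f α, p ∈ Nle f α := fun p hp m hm => (hp m hm).le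
  have hdisj : Disjoint (Submodule.span ℂ (Set.range v')) (LinearMap.ker Q.mkQ) := by
    rw [Submodule.ker_mkQ, Submodule.disjoint_def]
    intro p hp hpQ
    obtain ⟨a, ha, l, hl, hal⟩ := Submodule.mem_sup.1 hpQ
    have hl' : l = p - a := by rw [← hal]; ring
    have hpN : p ∈ Nle f α := fun m hm => (hspan_supp p hp m hm).le
    have hl0 : l = 0 := L_inter f hconv hnd α hα l
      (by rw [hl']; exact Submodule.sub_mem _ hpN (hlt_le a ha)) hl
    rw [hl0, add_zero] at hal
    rw [← support_eq_empty, Finset.eq_empty_iff_forall_notMem]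
    intro m hm
    have h1 := hspan_supp p hp m hm
    rw [← hal] at hm
    exact (ha m hm).ne h1
  have hli : LinearIndependent ℂ (Q.mkQ ∘ v') := hli'.map hdisj
  have hrange : Submodule.span ℂ (Set.range (Q.mkQ ∘ v')) = grN f α := by
    rw [Set.range_comp, ← Submodule.map_span]
    apply le_antisymm
    · refine Submodule.map_mono (le_sup_of_le_left ?_)
      exact fun p hp m hm => (hspan_supp p hp m hm).le
    · rintro _ ⟨x, hx, rfl⟩
      obtain ⟨p, hp, l, hl, rfl⟩ := Submodule.mem_sup.1 hx
      refine ⟨restr (fun m => nu f (toR m) = α) p, ?_, ?_⟩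
      · refine Submodule.sum_mem _ fun m _ => ?_
        split_ifs with h
        · have h1 : monomial m (p.coeff m) = p.coeff m • v' ⟨m, h⟩ := by
            simp [v', smul_monomial]
          rw [h1]
          exact Submodule.smul_mem _ _ (Submodule.subset_span ⟨_, rfl⟩)
        · exact Submodule.zero_mem _
      · rw [← sub_eq_zero, ← map_sub, Submodule.mkQ_apply, Submodule.Quotient.mk_eq_zero]
        have h1 := restr_add (fun m => nu f (toR m) = α) p
        have h2 : restr (fun m => nu f (toR m) = α) p - (p + l)
            = -restr (fun m => ¬ nu f (toR m) = α) p + -l := by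
          conv_lhs => rw [← h1]
          rw [h1]
          nth_rewrite 2 [← h1]
          ring
        rw [h2]
        refine Submodule.add_mem_sup (Submodule.neg_mem _ ?_) (Submodule.neg_mem _ hl)
        intro m hm
        obtain ⟨h3, h4⟩ := restr_supp _ _ m hm
        exact lt_of_le_of_ne (hp m h3) h4
  rw [grDim, ← hrange, Module.finrank_eq_nat_card_basis (Module.Basis.span hli),
    ← Nat.card_coe_set_eq]
  exact Nat.card_congr (Finsupp.equivFunOnFinite.subtypeEquiv fun m => Iff.rfl)

end ToricProof


open ToricNewton in
/-- for `α < 1`, `dim gr^𝒩_α(ℬ/ℒ)` equals the number of lattice points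
`v ∈ ℕⁿ` with `ν(v) = α`. -/
theorem toric_newton_spectrum_below_one {n : ℕ} (hn : 1 ≤ n) (f : MvPolynomial (Fin n) ℂ)
    (hconv : Convenient f) (hnd : Nondegenerate f) :
    ∀ α : ℚ, α < 1 →
      grDim f (α : ℝ) = {v : Fin n → ℕ | nu f (natToR v) = (α : ℝ)}.ncard := by
  intro α hα
  exact ToricProof.final f hconv hnd (α : ℝ) (by exact_mod_cast hα)
end
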